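/- There exists ε₀ > 0 such that for every ε ∈ (0, ε₀) and every c > 0 there is a threshold q₀ = q₀(ε, c) with the following property. Let q ≥ q₀ be a natural number and let h : ℕ → ℝ be a multiplicative function with h(p) ≠ 0 for every prime p ∤ q. Then at least one of the following holds: (1) R(h;q) ≤ q^{2+ε}; (2) there exists a Dirichlet character χ (mod q) of order at most two such that ∑_{p prime, p ≤ q^{1/3}, h(p)χ(p) < 0} 1/p ≤ c · q^{−ε/100}. -/

import Mathlib

/-!
The signs of `h` at primes define a completely multiplicative `f : ℕ → {±1}` (`signFn`) which is the
sign of `h` on squarefree integers coprime to `q`. If some reduced class `a` contains no sign change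
up to `q ^ (2 + ε)`, then `f` is a constant `δ` on the squarefree integers of the class `a` up to
`q ^ (2 + ε)`. Elementary counting shows that `f` then agrees with a real character modulo `q` at
most primes. Let `E` be a small power of `q`, and `A` a far smaller one, absorbing divisor
functions and logarithms (`ArithBound`).

* A class function (`exists_class_function`). Two squarefree integers `n, n'` of the class `x` have
  a common squarefree cofactor `k` in the class `a / x`, coprime to `n n'` and of size `q E ^ 4`,
  unless `a / x` is one of few exceptional classes (`exists_squarefree`, a Legendre sieve). From
  `f n * f k = δ = f n' * f k` one gets `f n = f n'`, so `f` descends to a function `F` of the class.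
  Removing square factors prime by prime, `F y = f y` for all but a proportion about `1 / E` of the
  integers `y ≤ q E ^ 8` coprime to `q`.

* Approximate equations at all scales (`exists_approx_all`). The aim is a function `K` on the classes
  with `F (n x) = f n * K x` for most pairs of `n ≤ P` and reduced `x`. Suppose one is known at
  scale `L ≤ √q`. Most classes `x` can be written as `y / l` with `l ≤ L` prime and `y` of size
  `q E ^ 8 / P`, by a second moment computation (`card_few_reps_le`). Evaluating `F` at
  `n y = l (n x)` in two ways gives `f (n y) = f l * K (n x)`, hence `K (n x) = f n * (f l * f y)`
  for most `n ≤ P`. Since `F` is a dilate of `K` up to few errors, this is an equation for `F` at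
  scale `P`, valid for `P ≤ L E ^ 4`. A bounded number of steps leads from scale `1` past `√q`.

* The character (`exists_character`). Let `K` and `K'` belong to two scales whose product exceeds
  `q`. Most classes `z` are of the form `n / l` with `l`, `n` in these ranges, and
  `f n * K' x = F (n x) = F (l z x) = f l * K (z x)` shows that dilating `K` by `z` gives `± K'`.
  Combining the dilations by `z` and by `u z`, every dilation multiplies `F` by a sign up to few
  errors, and these signs form a homomorphism `χ` to `{±1}`.

* Comparison (`exists_char_sum_le`). For all but `P / E` of the `n ≤ P`, the sign `f n * χ n` is the
  one relating `K` to `F`, hence independent of `n`. Comparing scales `P` and `P / 2` down to scale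
  `1`, where `n = 1` can be used, this sign is `1`. Thus `f n = χ n` for all but `P / E` of the
  `n ≤ P`, for every `P` up to a power of `q` beyond `q ^ (1 / 3)`, and summing over dyadic blocks
  gives the bound, with the saving `1 / E` up to factors `A`.
-/

open scoped BigOperators Classical

noncomputable section

/-- `h` is a multiplicative arithmetic function. -/
def IsMultFn (h : ℕ → ℝ) : Prop :=
  h 1 = 1 ∧ ∀ m n : ℕ, Nat.Coprime m n → h (m * n) = h m * h n

/-- `signChangesBelow h q x` expresses `R(h;q) ≤ x`: every reduced residue class `a (mod q)`
contains squarefree integers `n₁, n₂ ≤ x` with `h n₁ < 0 < h n₂`. -/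
def signChangesBelow (h : ℕ → ℝ) (q : ℕ) (x : ℝ) : Prop :=
  ∀ a : (ZMod q)ˣ,
    (∃ n : ℕ, Squarefree n ∧ (n : ℝ) ≤ x ∧ ((n : ZMod q) = (a : ZMod q)) ∧ h n < 0) ∧
    (∃ n : ℕ, Squarefree n ∧ (n : ℝ) ≤ x ∧ ((n : ZMod q) = (a : ZMod q)) ∧ 0 < h n)

section

open Finset

/-! ### Divisor and prime number bounds -/

/-- The divisor bound `d(n) ≪_τ n ^ τ`. -/
lemma card_divisors_le_rpow (τ : ℝ) (hτ : 0 < τ) :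
    ∃ C : ℝ, 0 < C ∧ ∀ n : ℕ, 1 ≤ n → (#n.divisors : ℝ) ≤ C * (n : ℝ) ^ τ := by
  have hl : 0 < Real.log 2 := Real.log_pos (by norm_num)
  set C₀ : ℝ := 1 + 1 / (τ * Real.log 2) with hC₀
  have hC1 : 1 ≤ C₀ := by
    rw [hC₀]; have : 0 ≤ 1 / (τ * Real.log 2) := by positivity
    linarith
  set T : ℕ := ⌈(2 : ℝ) ^ (1 / τ)⌉₊ with hT
  have key : ∀ p v : ℕ, p.Prime → ((v : ℝ) + 1) ≤ (if p < T then C₀ else 1) * ((p : ℝ) ^ v) ^ τ := by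
    intro p v hp
    have hp0 : (0 : ℝ) ≤ p := by positivity
    have e : ((p : ℝ) ^ v) ^ τ = ((p : ℝ) ^ τ) ^ v := by
      rw [← Real.rpow_natCast, ← Real.rpow_natCast, ← Real.rpow_mul hp0, ← Real.rpow_mul hp0,
        mul_comm]
    rw [e]
    split_ifs with h
    · have h2 : (2 : ℝ) ^ τ ≤ (p : ℝ) ^ τ :=
        Real.rpow_le_rpow (by norm_num) (by exact_mod_cast hp.two_le) hτ.le
      have h3 : 1 + τ * Real.log 2 ≤ (2 : ℝ) ^ τ := by
        rw [Real.rpow_def_of_pos (by norm_num)]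
        have := Real.add_one_le_exp (Real.log 2 * τ)
        linarith
      have h4 : 1 + (v : ℝ) * (τ * Real.log 2) ≤ ((p : ℝ) ^ τ) ^ v :=
        (one_add_mul_le_pow (by have : 0 < τ * Real.log 2 := by positivity
                                linarith) v).trans
          (pow_le_pow_left₀ (by positivity) (h3.trans h2) v)
      have h5 : (v : ℝ) + 1 ≤ C₀ * (1 + (v : ℝ) * (τ * Real.log 2)) := by
        have : C₀ * (1 + (v : ℝ) * (τ * Real.log 2))
            = 1 + v + 1 / (τ * Real.log 2) + v * (τ * Real.log 2) := by
          rw [hC₀]; field_simp; ring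
        rw [this]
        have : 0 ≤ 1 / (τ * Real.log 2) + v * (τ * Real.log 2) := by positivity
        linarith
      exact h5.trans (mul_le_mul_of_nonneg_left h4 (by linarith))
    · have h2 : (2 : ℝ) ≤ (p : ℝ) ^ τ := by
        have h1 : (2 : ℝ) ^ (1 / τ) ≤ p := by
          have := Nat.le_ceil ((2 : ℝ) ^ (1 / τ))
          refine this.trans ?_
          exact_mod_cast not_lt.mp h
        calc (2 : ℝ) = ((2 : ℝ) ^ (1 / τ)) ^ τ := by
              rw [← Real.rpow_mul (by norm_num)]; field_simp; simp
          _ ≤ _ := Real.rpow_le_rpow (by positivity) h1 hτ.le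
      have h3 : (v : ℝ) + 1 ≤ 2 ^ v := by
        have := one_add_mul_le_pow (a := (1 : ℝ)) (by norm_num) v
        norm_num at this; linarith
      rw [one_mul]
      exact h3.trans (pow_le_pow_left₀ (by norm_num) h2 v)
  refine ⟨C₀ ^ T, by positivity, fun n hn => ?_⟩
  have hn0 : n ≠ 0 := by omega
  rw [Nat.card_divisors hn0]
  push_cast
  calc ∏ p ∈ n.primeFactors, ((n.factorization p : ℝ) + 1)
      ≤ ∏ p ∈ n.primeFactors, ((if p < T then C₀ else 1) * ((p : ℝ) ^ n.factorization p) ^ τ) :=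
        prod_le_prod (fun _ _ => by positivity)
          (fun p hp => key p _ (Nat.prime_of_mem_primeFactors hp))
    _ = (∏ p ∈ n.primeFactors, (if p < T then C₀ else 1)) * (n : ℝ) ^ τ := by
        rw [prod_mul_distrib]
        congr 1
        rw [Real.finsetProd_rpow _ _ (fun _ _ => by positivity)]
        congr 1
        conv_rhs => rw [← Nat.prod_factorization_pow_eq_self hn0]
        rw [Finsupp.prod]; push_cast; rfl
    _ ≤ _ := by
        refine mul_le_mul_of_nonneg_right ?_ (by positivity)
        rw [prod_ite, prod_const, prod_const, one_pow, mul_one]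
        refine pow_le_pow_right₀ hC1 ?_
        calc _ ≤ #(range T) := card_le_card (fun p hp => by
              simp only [mem_filter] at hp; simpa using hp.2)
          _ = T := by simp

/-- The arithmetic input, with `A` playing the role of a factor `q ^ o(1)`: the divisor bound and
a lower bound of Chebyshev type, both valid up to `q ^ 5`. -/
structure ArithBound (q A : ℕ) : Prop where
  hundred_le : 100 ≤ A
  divisors : ∀ z : ℕ, 1 ≤ z → z ≤ q ^ 5 → #z.divisors ≤ A
  primes : ∀ X : ℕ, A ≤ X → X ≤ q ^ 5 → 10 * X ≤ A * Nat.primeCounting X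

lemma primeCounting_ge (X : ℕ) (hX : 100 ≤ X) :
    (X : ℝ) / (4 * Real.log X) ≤ Nat.primeCounting X := by
  have h1 := Chebyshev.pi_ge X
  have hX' : (100 : ℝ) ≤ X := by exact_mod_cast hX
  have hlog : 0 < Real.log X := Real.log_pos (by linarith)
  refine le_trans ?_ h1
  rw [div_le_div_iff₀ (by positivity) hlog]
  have h2 : Real.log (X + 1) ≤ 2 * Real.sqrt (X + 1) := by
    have h := Real.log_le_sub_one_of_pos (Real.sqrt_pos.mpr (by linarith : (0:ℝ) < X + 1))
    rw [Real.log_sqrt (by linarith)] at h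
    linarith
  have h3 : Real.sqrt (X + 1) ≤ (X + 1) / 10 := by
    rw [Real.sqrt_le_left (by linarith)]
    nlinarith
  have h4 := Real.log_two_gt_d9
  have : (X : ℝ) ≤ 4 * (X * Real.log 2 - Real.log (X + 1)) := by nlinarith
  nlinarith

lemma exists_arithBound (τ : ℝ) (hτ : 0 < τ) :
    ∃ q₀ : ℕ, ∀ q : ℕ, q₀ ≤ q → ArithBound q ⌈(q : ℝ) ^ τ⌉₊ := by
  obtain ⟨C, hC, hdiv⟩ := card_divisors_le_rpow (τ / 10) (by positivity)
  have e1 : ∀ᶠ q : ℕ in Filter.atTop, (100 : ℝ) ≤ (q : ℝ) ^ τ :=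
    ((tendsto_rpow_atTop hτ).comp tendsto_natCast_atTop_atTop).eventually_ge_atTop 100
  have e2 : ∀ᶠ q : ℕ in Filter.atTop, C ≤ (q : ℝ) ^ (τ / 2) :=
    ((tendsto_rpow_atTop (by positivity)).comp tendsto_natCast_atTop_atTop).eventually_ge_atTop C
  have e3 : ∀ᶠ q : ℕ in Filter.atTop, 200 * Real.log q ≤ (q : ℝ) ^ τ := by
    have := (isLittleO_log_rpow_atTop hτ).comp_tendsto
      (tendsto_natCast_atTop_atTop (R := ℝ))
    have := this.bound (c := 1 / 200) (by norm_num)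
    filter_upwards [this, Filter.eventually_ge_atTop 1] with q hq hq1
    have hl : 0 ≤ Real.log q := Real.log_natCast_nonneg q
    have hp : 0 ≤ (q : ℝ) ^ τ := by positivity
    simp only [Function.comp, Real.norm_eq_abs, abs_of_nonneg hl, abs_of_nonneg hp] at hq
    linarith
  obtain ⟨q₀, hq₀⟩ := Filter.eventually_atTop.mp
    (((e1.and e2).and e3).and (Filter.eventually_ge_atTop 2))
  refine ⟨q₀, fun q hq => ?_⟩
  obtain ⟨⟨⟨h1, h2⟩, h3⟩, h4⟩ := hq₀ q hq
  have hceil := Nat.le_ceil ((q : ℝ) ^ τ)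
  have hA : 100 ≤ ⌈(q : ℝ) ^ τ⌉₊ := by exact_mod_cast h1.trans hceil
  have hqpos : (0 : ℝ) < q := by positivity
  refine ⟨hA, fun z hz hzq => ?_, fun X hX hXq => ?_⟩
  · have : (#z.divisors : ℝ) ≤ (q : ℝ) ^ τ := by
      calc (#z.divisors : ℝ) ≤ C * (z : ℝ) ^ (τ / 10) := hdiv z hz
        _ ≤ (q : ℝ) ^ (τ / 2) * ((q : ℝ) ^ 5) ^ (τ / 10) := by
            gcongr
            exact_mod_cast hzq
        _ = (q : ℝ) ^ τ := by
            rw [← Real.rpow_natCast, ← Real.rpow_mul hqpos.le, ← Real.rpow_add hqpos]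
            congr 1; push_cast; ring
    exact_mod_cast this.trans hceil
  · have hX100 : 100 ≤ X := hA.trans hX
    have hX' : (100 : ℝ) ≤ X := by exact_mod_cast hX100
    have hlogX : 0 < Real.log X := Real.log_pos (by linarith)
    have hlog : Real.log X ≤ 5 * Real.log q := by
      calc Real.log X ≤ Real.log ((q : ℝ) ^ 5) :=
            Real.log_le_log (by linarith) (by exact_mod_cast hXq)
        _ = _ := by rw [Real.log_pow]; norm_num
    have hp := primeCounting_ge X hX100
    rw [div_le_iff₀ (by positivity)] at hp
    have hpi : (0 : ℝ) ≤ Nat.primeCounting X := by positivity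
    have : (10 : ℝ) * X ≤ ⌈(q : ℝ) ^ τ⌉₊ * Nat.primeCounting X := by
      have : 4 * Real.log X * 10 ≤ ⌈(q : ℝ) ^ τ⌉₊ := by linarith
      nlinarith
    exact_mod_cast this

/-! ### Counting in residue classes -/

/-- A finite set of integers of diameter at most `M / q` has at most `M / q + 1` elements. -/
lemma card_mul_le_of_diam (S : Finset ℤ) (q : ℕ) (M : ℝ) (hM : 0 ≤ M)
    (h : ∀ s ∈ S, ∀ t ∈ S, ((s : ℝ) - t) * q ≤ M) : (#S : ℝ) * q ≤ M + q := by
  rcases S.eq_empty_or_nonempty with rfl | hS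
  · simp; positivity
  have h1 : S ⊆ Icc (S.min' hS) (S.max' hS) := fun s hs =>
    mem_Icc.mpr ⟨S.min'_le s hs, S.le_max' s hs⟩
  have h2 := card_le_card h1
  rw [Int.card_Icc] at h2
  have h3 : S.min' hS ≤ S.max' hS := S.min'_le _ (S.max'_mem hS)
  have h4 : (#S : ℤ) ≤ S.max' hS - S.min' hS + 1 := by omega
  have h5 : (#S : ℝ) ≤ (S.max' hS : ℝ) - S.min' hS + 1 := by exact_mod_cast h4
  have h6 := h _ (S.max'_mem hS) _ (S.min'_mem hS)
  have : (0 : ℝ) ≤ q := by positivity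
  nlinarith

/-- A residue class modulo `l` has at most `#I / l + 1` elements in an interval `I`. -/
lemma card_mul_le_of_modEq (S I : Finset ℕ) (l : ℕ) (hSI : S ⊆ I)
    (hI : ∀ a ∈ I, ∀ b ∈ I, ∀ t, a ≤ t → t ≤ b → t ∈ I)
    (hS : ∀ s ∈ S, ∀ t ∈ S, s ≡ t [MOD l]) : #S * l ≤ #I + l := by
  rcases S.eq_empty_or_nonempty with rfl | hne
  · simp
  set a := S.min' hne
  set b := S.max' hne
  have hab : a ≤ b := S.min'_le _ (S.max'_mem hne)
  have h1 : b - a + 1 ≤ #I := by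
    have : Icc a b ⊆ I := fun t ht =>
      hI a (hSI (S.min'_mem hne)) b (hSI (S.max'_mem hne)) t (mem_Icc.mp ht).1 (mem_Icc.mp ht).2
    have := card_le_card this
    rw [Nat.card_Icc] at this; omega
  have h2 : #S ≤ (b - a) / l + 1 := by
    rw [← card_range ((b - a) / l + 1)]
    refine card_le_card_of_injOn (fun s => (s - a) / l) (fun s hs => ?_) (fun s hs t ht hst => ?_)
    · have : s ≤ b := S.le_max' s hs
      simp only [coe_range, Set.mem_Iio]
      exact Nat.lt_succ_of_le (Nat.div_le_div_right (by omega))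
    · have hs' : a ≤ s := S.min'_le s hs
      have ht' : a ≤ t := S.min'_le t ht
      have d1 : l ∣ s - a := (Nat.modEq_iff_dvd' hs').mp (hS a (S.min'_mem hne) s hs)
      have d2 : l ∣ t - a := (Nat.modEq_iff_dvd' ht').mp (hS a (S.min'_mem hne) t ht)
      have := Nat.div_mul_cancel d1
      have := Nat.div_mul_cancel d2
      simp only at hst
      rw [hst] at *
      omega
  have h3 := Nat.div_mul_le_self (b - a) l
  nlinarith

/-- The number of solutions of `l' y ≡ l y' (mod q)` in a box, for coprime `l ≠ l'`. -/
lemma card_pairs_le (q Y l l' : ℕ) (hq : 0 < q) (hl : 0 < l) (hll : l.Coprime l') :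
    (#{p ∈ Icc 1 Y ×ˢ Icc 1 Y | ((l' * p.1 : ℕ) : ZMod q) = ((l * p.2 : ℕ) : ZMod q)} : ℝ)
      ≤ (Y : ℝ) ^ 2 / q + Y / l + (l + l') * Y / q + 1 := by
  set T := {p ∈ Icc 1 Y ×ˢ Icc 1 Y | ((l' * p.1 : ℕ) : ZMod q) = ((l * p.2 : ℕ) : ZMod q)} with hT
  set g : ℕ × ℕ → ℤ := fun p => ((l' * p.1 : ℤ) - l * p.2) / q with hg
  have hqR : (0 : ℝ) < q := by exact_mod_cast hq
  have hlR : (0 : ℝ) < l := by exact_mod_cast hl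
  have hgq : ∀ p ∈ T, g p * q = (l' * p.1 : ℤ) - l * p.2 := by
    intro p hp
    have h := (mem_filter.mp hp).2
    have : (q : ℤ) ∣ (l' * p.1 : ℤ) - l * p.2 := by
      rw [← ZMod.intCast_zmod_eq_zero_iff_dvd _ q]
      push_cast at h ⊢
      rw [h, sub_self]
    exact Int.ediv_mul_cancel this
  have hbox : ∀ p ∈ T, 1 ≤ p.1 ∧ p.1 ≤ Y ∧ 1 ≤ p.2 ∧ p.2 ≤ Y := by
    intro p hp
    have h := (mem_filter.mp hp).1
    simp only [mem_product, mem_Icc] at h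
    omega
  set KK := T.image g with hKK
  -- the number of values of `k = (l' y - l y') / q`
  have hK : (#KK : ℝ) * q ≤ (l + l') * Y + q := by
    refine card_mul_le_of_diam _ _ _ (by positivity) ?_
    intro s hs t ht
    obtain ⟨p, hp, rfl⟩ := mem_image.mp hs
    obtain ⟨p', hp', rfl⟩ := mem_image.mp ht
    have e1 : (g p : ℝ) * q = l' * p.1 - l * p.2 := by exact_mod_cast hgq p hp
    have e2 : (g p' : ℝ) * q = l' * p'.1 - l * p'.2 := by exact_mod_cast hgq p' hp'
    rw [sub_mul, e1, e2]
    obtain ⟨_, b1, _, _⟩ := hbox p hp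
    obtain ⟨_, _, _, b2⟩ := hbox p' hp'
    have b1' : (p.1 : ℝ) ≤ Y := by exact_mod_cast b1
    have b2' : (p'.2 : ℝ) ≤ Y := by exact_mod_cast b2
    have : (0 : ℝ) ≤ l * p.2 := by positivity
    have : (0 : ℝ) ≤ l' * p'.1 := by positivity
    have : (l' : ℝ) * p.1 ≤ l' * Y := by gcongr
    have : (l : ℝ) * p'.2 ≤ l * Y := by gcongr
    linarith
  set I : ℤ → Finset ℕ := fun k => {t ∈ Icc 1 Y | k * q + l ≤ (l' * t : ℤ) ∧ (l' * t : ℤ) ≤ k * q + l * Y} with hI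
  -- for given `k`, the number `y` lies in one residue class modulo `l`, and determines `y'`
  have hfib : ∀ k ∈ KK, #{p ∈ T | g p = k} * l ≤ #(I k) + l := by
    intro k _
    have hinj : Set.InjOn Prod.fst (SetLike.coe {p ∈ T | g p = k}) := by
      intro p hp p' hp' e
      simp only [coe_filter, Set.mem_ofPred_eq] at hp hp'
      have e1 := hgq p hp.1
      have e2 := hgq p' hp'.1
      rw [hp.2] at e1
      rw [hp'.2, ← e] at e2
      have : (l : ℤ) * p.2 = l * p'.2 := by linarith
      have := mul_left_cancel₀ (by exact_mod_cast hl.ne') this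
      exact Prod.ext e (by exact_mod_cast this)
    rw [← card_image_of_injOn hinj]
    refine card_mul_le_of_modEq _ (I k) l ?_ ?_ ?_
    · intro t ht
      obtain ⟨p, hp, rfl⟩ := mem_image.mp ht
      obtain ⟨hpT, hpk⟩ := mem_filter.mp hp
      have e := hgq p hpT
      obtain ⟨a1, a2, a3, a4⟩ := hbox p hpT
      rw [hpk] at e
      simp only [hI, mem_filter, mem_Icc]
      have a3' : (1 : ℤ) ≤ p.2 := by exact_mod_cast a3
      have a4' : (p.2 : ℤ) ≤ Y := by exact_mod_cast a4
      refine ⟨⟨a1, a2⟩, ?_, ?_⟩ <;> nlinarith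
    · intro a ha b hb t hat htb
      simp only [hI, mem_filter, mem_Icc] at ha hb ⊢
      have h1 : (l' * a : ℤ) ≤ l' * t := by gcongr
      have h2 : (l' * t : ℤ) ≤ l' * b := by gcongr
      refine ⟨by omega, by linarith, by linarith⟩
    · intro s hs t ht
      obtain ⟨p, hp, rfl⟩ := mem_image.mp hs
      obtain ⟨p', hp', rfl⟩ := mem_image.mp ht
      obtain ⟨hpT, hpk⟩ := mem_filter.mp hp
      obtain ⟨hpT', hpk'⟩ := mem_filter.mp hp'
      have e1 := hgq p hpT
      have e2 := hgq p' hpT'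
      rw [hpk] at e1
      rw [hpk'] at e2
      have : l' * p.1 ≡ l' * p'.1 [MOD l] := by
        rw [Nat.modEq_iff_dvd]
        push_cast
        exact ⟨p'.2 - p.2, by linarith⟩
      exact Nat.ModEq.cancel_left_of_coprime hll this
  have hIsum : (∑ k ∈ KK, (#(I k) : ℝ)) * q ≤ Y * (l * Y + q) := by
    have e : (∑ k ∈ KK, (#(I k) : ℝ)) = ∑ t ∈ Icc 1 Y,
        (#{k ∈ KK | k * q + l ≤ (l' * t : ℤ) ∧ (l' * t : ℤ) ≤ k * q + l * Y} : ℝ) := by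
      simp only [hI, card_filter]
      push_cast
      rw [sum_comm]
    rw [e, sum_mul]
    refine (sum_le_card_nsmul _ _ ((l : ℝ) * Y + q) ?_).trans (by simp [mul_add])
    intro t _
    refine card_mul_le_of_diam _ _ _ (by positivity) ?_
    intro s hs s' hs'
    have h1 := (mem_filter.mp hs).2.1
    have h2 := (mem_filter.mp hs').2.2
    have h1' : (s : ℝ) * q + l ≤ (l' * t : ℝ) := by exact_mod_cast h1
    have h2' : (l' * t : ℝ) ≤ s' * q + l * Y := by exact_mod_cast h2
    rw [sub_mul]; linarith
  have hcard : (#T : ℝ) * l ≤ (∑ k ∈ KK, (#(I k) : ℝ)) + #KK * l := by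
    have : #T = ∑ k ∈ KK, #{p ∈ T | g p = k} :=
      card_eq_sum_card_fiberwise (fun p hp => mem_image_of_mem g hp)
    have h2 : #T * l ≤ (∑ k ∈ KK, #(I k)) + #KK * l := by
      rw [this, sum_mul, ← smul_eq_mul (#KK), ← sum_const, ← sum_add_distrib]
      exact sum_le_sum hfib
    exact_mod_cast h2
  have f1 : (∑ k ∈ KK, (#(I k) : ℝ)) ≤ Y * (l * Y + q) / q := by rwa [le_div_iff₀ hqR]
  have f2 : (#KK : ℝ) ≤ ((l + l') * Y + q) / q := by rwa [le_div_iff₀ hqR]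
  have f3 : (#T : ℝ) * l ≤ Y * (l * Y + q) / q + ((l + l') * Y + q) / q * l :=
    hcard.trans (by gcongr)
  have f4 : (#T : ℝ) ≤ (Y * (l * Y + q) / q + ((l + l') * Y + q) / q * l) / l := by
    rwa [le_div_iff₀ hlR]
  refine f4.trans (le_of_eq ?_)
  field_simp
  ring

/-- `1 ≤ n ≤ Y` meets every residue class at most `Y / q + 1` times. -/
lemma card_modEq_Icc_le (q Y : ℕ) (hq : 0 < q) (b : ZMod q) :
    (#{n ∈ Icc 1 Y | ((n : ℕ) : ZMod q) = b} : ℝ) ≤ (Y : ℝ) / q + 1 := by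
  have hqR : (0 : ℝ) < q := by exact_mod_cast hq
  have h := card_mul_le_of_modEq {n ∈ Icc 1 Y | ((n : ℕ) : ZMod q) = b} (Icc 1 Y) q
    (filter_subset _ _)
    (fun a ha b hb t h1 h2 => by simp only [mem_Icc] at *; omega)
    (fun s hs t ht => by
      rw [← ZMod.natCast_eq_natCast_iff, (mem_filter.mp hs).2, (mem_filter.mp ht).2])
  rw [Nat.card_Icc, Nat.add_sub_cancel] at h
  have hcast : (#{n ∈ Icc 1 Y | ((n : ℕ) : ZMod q) = b} : ℝ) * q ≤ Y + q := by exact_mod_cast h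
  have : (Y : ℝ) / q + 1 = (Y + q) / q := by field_simp
  rw [this, le_div_iff₀ hqR]; exact hcast

/-! ### Classes represented as quotients -/

/-- A family of dilations: pairwise coprime integers of size about `L` up to a factor `A`, coprime
to `q`, whose number is about `L` up to a factor `A`. -/
structure IsDilationSet (q A L : ℕ) (S : Finset ℕ) : Prop where
  nonempty : S.Nonempty
  pos : ∀ l ∈ S, 0 < l
  le : ∀ l ∈ S, l ≤ L
  ge : ∀ l ∈ S, L ≤ A * l
  coprime : ∀ l ∈ S, l.Coprime q
  pairwise : ∀ l ∈ S, ∀ l' ∈ S, l ≠ l' → l.Coprime l'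
  le_card : L ≤ A * #S

lemma isDilationSet_one (q A : ℕ) (hA : 1 ≤ A) : IsDilationSet q A 1 {1} where
  nonempty := by simp
  pos := by simp
  le := by simp
  ge := by simpa
  coprime := by simp
  pairwise := by simp
  le_card := by simpa

lemma card_primeFactors_le_card_divisors (n : ℕ) : #n.primeFactors ≤ #n.divisors := by
  refine card_le_card fun p hp => ?_
  have := Nat.mem_primeFactors.mp hp
  exact Nat.mem_divisors.mpr ⟨this.2.1, this.2.2⟩

lemma card_primes_Icc (X : ℕ) : #{p ∈ Icc 1 X | p.Prime} = Nat.primeCounting X := by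
  rw [Nat.primeCounting, Nat.primeCounting', Nat.count_eq_card_filter_range]
  congr 1
  ext p
  simp only [mem_filter, mem_Icc, mem_range]
  constructor
  · rintro ⟨h, hp⟩; exact ⟨by omega, hp⟩
  · rintro ⟨h, hp⟩; exact ⟨⟨hp.one_lt.le, by omega⟩, hp⟩

lemma exists_isDilationSet {q A L : ℕ} (hq : 0 < q) (h : ArithBound q A) (hL : A ^ 2 ≤ L)
    (hLq : L ≤ q ^ 5) : ∃ S, IsDilationSet q A L S := by
  have hA := h.hundred_le
  set X := L / A with hX
  have hAX : A ≤ X := by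
    rw [hX, Nat.le_div_iff_mul_le (by omega)]; nlinarith
  have hXL : A * X ≤ L := Nat.mul_div_le L A
  have hXL' : L < A * (X + 1) := by
    have := Nat.lt_div_mul_add (a := L) (b := A) (by omega)
    rw [← hX] at this; nlinarith
  set S := {p ∈ Icc 1 L | p.Prime} \ (Icc 1 X ∪ q.primeFactors) with hS
  have hω : #q.primeFactors ≤ A :=
    (card_primeFactors_le_card_divisors q).trans (h.divisors q hq (Nat.le_self_pow (by norm_num) q))
  have hpi : 10 * L ≤ A * Nat.primeCounting L := h.primes L (by nlinarith) hLq
  have hcard : Nat.primeCounting L ≤ #S + (X + A) := by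
    rw [← card_primes_Icc]
    have h1 := le_card_sdiff (Icc 1 X ∪ q.primeFactors) {p ∈ Icc 1 L | p.Prime}
    have h2 := card_union_le (Icc 1 X) q.primeFactors
    rw [Nat.card_Icc] at h2
    rw [← hS] at h1
    omega
  have hc : L ≤ A * #S := by nlinarith
  have hmem : ∀ l ∈ S, l.Prime ∧ l ≤ L ∧ X < l ∧ ¬ l ∣ q := by
    intro l hl
    simp only [hS, mem_sdiff, mem_filter, mem_Icc, mem_union, not_or, Nat.mem_primeFactors] at hl
    refine ⟨hl.1.2, hl.1.1.2, ?_, fun hd => hl.2.2 ⟨hl.1.2, hd, hq.ne'⟩⟩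
    by_contra hcon
    exact hl.2.1 ⟨hl.1.1.1, by omega⟩
  refine ⟨S, ?_, fun l hl => (hmem l hl).1.pos, fun l hl => (hmem l hl).2.1, fun l hl => ?_,
    fun l hl => (Nat.Prime.coprime_iff_not_dvd (hmem l hl).1).mpr (hmem l hl).2.2.2,
    fun l hl l' hl' hne => (Nat.coprime_primes (hmem l hl).1 (hmem l' hl').1).mpr hne, hc⟩
  · rw [← card_pos]; by_contra hcon
    have : #S = 0 := by omega
    rw [this] at hc; nlinarith
  · have := (hmem l hl).2.2.1
    nlinarith

/-- The representations of the class `x` as `y / l` with `l ∈ S` and `1 ≤ y ≤ Y`. -/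
def reps (q Y : ℕ) (S : Finset ℕ) (x : ZMod q) : Finset (ℕ × ℕ) :=
  {p ∈ S ×ˢ Icc 1 Y | (p.2 : ZMod q) = p.1 * x}

lemma card_reps (q Y : ℕ) (S : Finset ℕ) (x : ZMod q) :
    #(reps q Y S x) = ∑ l ∈ S, #{y ∈ Icc 1 Y | ((y : ℕ) : ZMod q) = l * x} := by
  rw [reps, card_filter, sum_product]
  simp only [card_filter]

lemma pairs_le_of_isDilationSet {q A L Y : ℕ} {S : Finset ℕ} (hq : 0 < q)
    (hS : IsDilationSet q A L S) (hL : 0 < L) (l l' : ℕ) (hl : l ∈ S) (hl' : l' ∈ S) :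
    (#{p ∈ Icc 1 Y ×ˢ Icc 1 Y | ((l' * p.1 : ℕ) : ZMod q) = ((l * p.2 : ℕ) : ZMod q)} : ℝ)
      ≤ (Y : ℝ) ^ 2 / q + A * Y / L + 2 * L * Y / q + 1 + if l = l' then (Y : ℝ) else 0 := by
  have hqR : (0 : ℝ) < q := by exact_mod_cast hq
  have hLR : (0 : ℝ) < L := by exact_mod_cast hL
  have hlR : (0 : ℝ) < l := by exact_mod_cast hS.pos l hl
  have h1 : (l : ℝ) ≤ L := by exact_mod_cast hS.le l hl
  have h2 : (l' : ℝ) ≤ L := by exact_mod_cast hS.le l' hl'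
  have h3 : (L : ℝ) ≤ A * l := by exact_mod_cast hS.ge l hl
  split_ifs with h
  · subst h
    have : (#{p ∈ Icc 1 Y ×ˢ Icc 1 Y | ((l * p.1 : ℕ) : ZMod q) = ((l * p.2 : ℕ) : ZMod q)} : ℝ)
        ≤ Y * ((Y : ℝ) / q + 1) := by
      rw [card_filter, sum_product]
      push_cast
      refine (sum_le_card_nsmul _ _ ((Y : ℝ) / q + 1) fun y _ => ?_).trans (by simp [mul_add])
      refine le_trans (le_of_eq ?_) (card_modEq_Icc_le q Y hq (y : ZMod q))
      rw [card_filter]; push_cast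
      refine sum_congr rfl fun z _ => ?_
      have hu : IsUnit (l : ZMod q) := (ZMod.isUnit_iff_coprime l q).mpr (hS.coprime l hl)
      simp only [hu.mul_right_inj, eq_comm]
    refine this.trans ?_
    have : (0 : ℝ) ≤ A * Y / L := by positivity
    have : (0 : ℝ) ≤ 2 * L * Y / q := by positivity
    have : (Y : ℝ) * (Y / q + 1) = Y ^ 2 / q + Y := by ring
    linarith
  · refine (card_pairs_le q Y l l' hq (hS.pos l hl) (hS.pairwise l hl l' hl' h)).trans ?_
    have : (Y : ℝ) / l ≤ A * Y / L := by
      rw [div_le_div_iff₀ hlR hLR]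
      have : (0 : ℝ) ≤ Y := by positivity
      nlinarith
    have : ((l : ℝ) + l') * Y / q ≤ 2 * L * Y / q := by
      gcongr; linarith
    linarith

/-- Equidistribution of `y / l` on average: all but `q / E` classes have at least half the expected
number of representations. -/
lemma card_few_reps_le {q A L Y E : ℕ} {S : Finset ℕ} [NeZero q]
    (hS : IsDilationSet q A L S) (hL : 0 < L) (hY : 0 < Y) (hA : 100 ≤ A) (hE : 9 * A ≤ E)
    (h1 : q * E ^ 2 ≤ L * Y) (h2 : L * E ^ 2 ≤ Y) (h3 : q * E ^ 2 ≤ Y ^ 2) :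
    #{x : ZMod q | 2 * q * #(reps q Y S x) < #S * Y} * E ≤ q := by
  have hq : 0 < q := NeZero.pos q
  have hqR : (0 : ℝ) < q := by exact_mod_cast hq
  have hLR : (0 : ℝ) < L := by exact_mod_cast hL
  have hYR : (0 : ℝ) < Y := by exact_mod_cast hY
  set m : ℝ := (#S : ℝ) with hm
  have hmpos : 0 < m := by rw [hm]; exact_mod_cast hS.nonempty.card_pos
  set r : ZMod q → ℝ := fun x => (#(reps q Y S x) : ℝ) with hr
  have hsum : ∑ x, r x = m * Y := by
    simp only [hr, reps, card_filter]
    push_cast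
    rw [sum_comm]
    have : ∀ p ∈ S ×ˢ Icc 1 Y, (∑ x : ZMod q, if ((p.2 : ℕ) : ZMod q) = p.1 * x then (1 : ℝ) else 0) = 1 := by
      intro p hp
      obtain ⟨u, hu⟩ : IsUnit (p.1 : ZMod q) :=
        (ZMod.isUnit_iff_coprime p.1 q).mpr (hS.coprime _ (mem_product.mp hp).1)
      have : ∀ x : ZMod q, (((p.2 : ℕ) : ZMod q) = p.1 * x) ↔ (↑u⁻¹ * (p.2 : ZMod q) = x) := by
        intro x; rw [← hu, Units.inv_mul_eq_iff_eq_mul]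
      simp only [this]
      simp
    rw [sum_congr rfl this]
    simp [hm]
  set B : ℝ := (Y : ℝ) ^ 2 / q + A * Y / L + 2 * L * Y / q + 1 with hB
  have hsq : ∑ x, r x ^ 2 ≤ m ^ 2 * B + m * Y := by
    have e : ∀ x, r x ^ 2 = ∑ l ∈ S, ∑ l' ∈ S, (#{y ∈ Icc 1 Y | ((y : ℕ) : ZMod q) = l * x} : ℝ)
        * (#{y ∈ Icc 1 Y | ((y : ℕ) : ZMod q) = l' * x} : ℝ) := by
      intro x
      simp only [hr]
      rw [card_reps, sq]; push_cast
      rw [sum_mul_sum]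
    simp only [e]
    rw [sum_comm]
    have step : ∀ l ∈ S, ∀ l' ∈ S, ∑ x : ZMod q, (#{y ∈ Icc 1 Y | ((y : ℕ) : ZMod q) = l * x} : ℝ)
        * (#{y ∈ Icc 1 Y | ((y : ℕ) : ZMod q) = l' * x} : ℝ) ≤ B + if l = l' then (Y : ℝ) else 0 := by
      intro l hl l' hl'
      refine le_trans ?_ (pairs_le_of_isDilationSet hq hS hL l l' hl hl')
      have : ∀ x : ZMod q, #{y ∈ Icc 1 Y | ((y : ℕ) : ZMod q) = l * x}
          * #{y ∈ Icc 1 Y | ((y : ℕ) : ZMod q) = l' * x}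
          = ∑ p ∈ Icc 1 Y ×ˢ Icc 1 Y, if ((p.1 : ℕ) : ZMod q) = l * x ∧ ((p.2 : ℕ) : ZMod q) = l' * x then 1 else 0 := by
        intro x
        rw [← card_product, ← card_filter, ← filter_product]
      rw [card_filter]
      have h' : ∑ x : ZMod q, #{y ∈ Icc 1 Y | ((y : ℕ) : ZMod q) = l * x}
          * #{y ∈ Icc 1 Y | ((y : ℕ) : ZMod q) = l' * x} ≤ ∑ p ∈ Icc 1 Y ×ˢ Icc 1 Y,
            if ((l' * p.1 : ℕ) : ZMod q) = ((l * p.2 : ℕ) : ZMod q) then 1 else 0 := by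
        simp only [this]
        rw [sum_comm]
        refine sum_le_sum fun p _ => ?_
        obtain ⟨u, hu⟩ : IsUnit (l : ZMod q) := (ZMod.isUnit_iff_coprime l q).mpr (hS.coprime _ hl)
        rw [← card_filter]
        split_ifs with hp
        · refine card_le_one.mpr fun x hx x' hx' => ?_
          have hx := (mem_filter.mp hx).2.1
          have hx' := (mem_filter.mp hx').2.1
          rw [hx, ← hu] at hx'
          exact u.isUnit.mul_right_inj.mp hx'
        · rw [Nat.le_zero, card_eq_zero, filter_eq_empty_iff]
          rintro x _ ⟨h1, h2⟩
          apply hp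
          push_cast
          rw [h1, h2]; ring
      exact_mod_cast h'
    calc ∑ l ∈ S, ∑ x : ZMod q, ∑ l' ∈ S, (#{y ∈ Icc 1 Y | ((y : ℕ) : ZMod q) = l * x} : ℝ)
        * (#{y ∈ Icc 1 Y | ((y : ℕ) : ZMod q) = l' * x} : ℝ)
        = ∑ l ∈ S, ∑ l' ∈ S, ∑ x : ZMod q, (#{y ∈ Icc 1 Y | ((y : ℕ) : ZMod q) = l * x} : ℝ)
        * (#{y ∈ Icc 1 Y | ((y : ℕ) : ZMod q) = l' * x} : ℝ) :=
          sum_congr rfl fun l _ => sum_comm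
      _ ≤ ∑ l ∈ S, ∑ l' ∈ S, (B + if l = l' then (Y : ℝ) else 0) :=
          sum_le_sum fun l hl => sum_le_sum fun l' hl' => step l hl l' hl'
      _ = m ^ 2 * B + m * Y := by
          simp only [sum_add_distrib, sum_const, sum_ite_eq, sum_ite_mem, inter_self, nsmul_eq_mul]
          rw [← hm]; ring
  set X := ({x : ZMod q | 2 * q * #(reps q Y S x) < #S * Y} : Finset (ZMod q)) with hX
  have hcheb : (#X : ℝ) * (m * Y) ^ 2 ≤ 4 * (q ^ 2 * (m ^ 2 * B + m * Y) - q * (m * Y) ^ 2) := by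
    have : ∑ x, (q * r x - m * Y) ^ 2 ≤ q ^ 2 * (m ^ 2 * B + m * Y) - q * (m * Y) ^ 2 := by
      have : ∑ x, (q * r x - m * Y) ^ 2 = q ^ 2 * ∑ x, r x ^ 2 - 2 * q * (m * Y) * ∑ x, r x + q * (m * Y) ^ 2 := by
        rw [mul_sum, mul_sum, ← sum_sub_distrib]
        have : (q : ℝ) * (m * Y) ^ 2 = ∑ x : ZMod q, (m * Y) ^ 2 := by simp [ZMod.card]
        rw [this, ← sum_add_distrib]
        exact sum_congr rfl fun x _ => by ring
      rw [this, hsum]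
      have := mul_le_mul_of_nonneg_left hsq (by positivity : (0 : ℝ) ≤ (q : ℝ) ^ 2)
      nlinarith
    have h' : (#X : ℝ) * ((m * Y) ^ 2 / 4) ≤ ∑ x, (q * r x - m * Y) ^ 2 := by
      rw [← nsmul_eq_mul]
      refine (card_nsmul_le_sum X (fun x => (q * r x - m * Y) ^ 2) _ fun x hx => ?_).trans
        (sum_le_sum_of_subset_of_nonneg (subset_univ _) fun _ _ _ => sq_nonneg _)
      have hx := (mem_filter.mp hx).2
      have hx' : 2 * (q : ℝ) * r x < m * Y := by simp only [hr, hm]; exact_mod_cast hx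
      have : (0 : ℝ) < m * Y := by positivity
      nlinarith
    linarith
  have h1R : (q : ℝ) * E ^ 2 ≤ L * Y := by exact_mod_cast h1
  have h2R : (L : ℝ) * E ^ 2 ≤ Y := by exact_mod_cast h2
  have h3R : (q : ℝ) * E ^ 2 ≤ Y ^ 2 := by exact_mod_cast h3
  have hAR : (100 : ℝ) ≤ A := by exact_mod_cast hA
  have hER : (9 : ℝ) * A ≤ E := by exact_mod_cast hE
  have hmL : (L : ℝ) ≤ A * m := by rw [hm]; exact_mod_cast hS.le_card
  have hEpos : (0 : ℝ) < E := by linarith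
  have b1 : (q : ℝ) * E ^ 2 * (A * Y / L) ≤ A * Y ^ 2 := by
    calc (q : ℝ) * E ^ 2 * (A * Y / L) ≤ L * Y * (A * Y / L) := by gcongr
      _ = A * Y ^ 2 := by field_simp
  have b2 : (q : ℝ) * E ^ 2 * (2 * L * Y / q) ≤ 2 * Y ^ 2 := by
    have e : (q : ℝ) * E ^ 2 * (2 * L * Y / q) = 2 * Y * ((L : ℝ) * E ^ 2) := by field_simp
    rw [e]
    nlinarith
  have b3 : (q : ℝ) * E ^ 2 * (m * Y) ≤ m ^ 2 * (A * Y ^ 2) := by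
    calc (q : ℝ) * E ^ 2 * (m * Y) ≤ L * Y * (m * Y) := by gcongr
      _ ≤ A * m * Y * (m * Y) := by gcongr
      _ = _ := by ring
  have hB' : (q : ℝ) ^ 2 * (m ^ 2 * B + m * Y) - q * (m * Y) ^ 2
      = q * (m ^ 2 * (q * (A * Y / L) + q * (2 * L * Y / q) + q * 1) + q * (m * Y)) := by
    rw [hB]; field_simp; ring
  have fin : (#X : ℝ) * E ^ 2 * (m * Y) ^ 2 ≤ (q * E) * (m * Y) ^ 2 := by
    rw [hB'] at hcheb
    calc (#X : ℝ) * E ^ 2 * (m * Y) ^ 2 = (#X : ℝ) * (m * Y) ^ 2 * E ^ 2 := by ring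
      _ ≤ (4 * (q * (m ^ 2 * (q * (A * Y / L) + q * (2 * L * Y / q) + q * 1) + q * (m * Y)))) * E ^ 2 := by
          gcongr
      _ = 4 * q * (m ^ 2 * (q * E ^ 2 * (A * Y / L) + q * E ^ 2 * (2 * L * Y / q) + q * E ^ 2)
            + q * E ^ 2 * (m * Y)) := by ring
      _ ≤ 4 * q * (m ^ 2 * (A * Y ^ 2 + 2 * Y ^ 2 + Y ^ 2) + m ^ 2 * (A * Y ^ 2)) := by gcongr
      _ = (q * (8 * A + 12)) * (m * Y) ^ 2 := by ring
      _ ≤ _ := by gcongr; linarith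
  have fin2 := le_of_mul_le_mul_right fin (by positivity)
  have fin3 : (#X : ℝ) * E ≤ q := by
    have : (#X : ℝ) * E * E ≤ q * E := by nlinarith
    exact le_of_mul_le_mul_right this hEpos
  exact_mod_cast fin3

/-- Averaging: if every `x ∈ X` has at least `a / c` options, some choice of options has total
weight at most `c / a` times the weight of all options. -/
lemma exists_choice_sum_le {α ι : Type*} (X : Finset α) (R : α → Finset ι) (a c : ℕ) (ha : 0 < a)
    (hR : ∀ x ∈ X, a ≤ c * #(R x)) (w : α → ι → ℕ) [Nonempty ι] :
    ∃ σ : α → ι, (∀ x ∈ X, σ x ∈ R x) ∧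
      a * ∑ x ∈ X, w x (σ x) ≤ c * ∑ x ∈ X, ∑ i ∈ R x, w x i := by
  have h : ∀ x ∈ X, ∃ i ∈ R x, a * w x i ≤ c * ∑ i ∈ R x, w x i := by
    intro x hx
    have hne : (R x).Nonempty := by
      refine card_pos.mp (Nat.pos_of_ne_zero fun h0 => ?_)
      have := hR x hx
      rw [h0] at this; omega
    obtain ⟨i, hi, hmin⟩ := exists_min_image (R x) (w x) hne
    refine ⟨i, hi, ?_⟩
    calc a * w x i ≤ c * #(R x) * w x i := Nat.mul_le_mul_right _ (hR x hx)
      _ = c * (#(R x) * w x i) := by ring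
      _ ≤ _ := Nat.mul_le_mul_left _ (by
          rw [← smul_eq_mul]; exact card_nsmul_le_sum _ _ _ hmin)
  refine ⟨fun x => if hx : x ∈ X then (h x hx).choose else Classical.arbitrary ι,
    fun x hx => ?_, ?_⟩
  · simp only [hx, dite_true]; exact (h x hx).choose_spec.1
  · rw [mul_sum, mul_sum]
    refine sum_le_sum fun x hx => ?_
    simp only [hx, dite_true]; exact (h x hx).choose_spec.2

/-! ### Changing the scale of an approximate equation -/

lemma int_units_eq_iff {a b c : ℤˣ} : a = b * c ↔ b * a = c := by
  rcases Int.units_eq_one_or a with rfl | rfl <;> rcases Int.units_eq_one_or b with rfl | rfl <;>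
    rcases Int.units_eq_one_or c with rfl | rfl <;> decide

/-- The failures of the approximate equation `F (n x) = f n * K x` with `n ≤ L` coprime to `q` and
`x` a reduced class. -/
def defect (q : ℕ) [NeZero q] (f : ℕ → ℤˣ) (F K : ZMod q → ℤˣ) (L : ℕ) : Finset (ℕ × ZMod q) :=
  {p ∈ Icc 1 L ×ˢ univ | p.1.Coprime q ∧ IsUnit p.2 ∧ F (p.1 * p.2) ≠ f p.1 * K p.2}

/-- The integers up to `N` coprime to `q` on which `F` differs from `f`. -/
def excSet (q : ℕ) (f : ℕ → ℤˣ) (F : ZMod q → ℤˣ) (N : ℕ) : Finset ℕ :=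
  {y ∈ Icc 1 N | y.Coprime q ∧ F y ≠ f y}

/-- Some dilation has no more than its share of the defect. -/
lemma exists_good_dilation {q A L E b : ℕ} [NeZero q] {f : ℕ → ℤˣ} {F K : ZMod q → ℤˣ}
    {S : Finset ℕ} (hS : IsDilationSet q A L S)
    (hK : #(defect q f F K L) * E ≤ b * L * q) :
    ∃ l ∈ S, #{x : ZMod q | IsUnit x ∧ F (l * x) ≠ f l * K x} * E ≤ b * A * q := by
  obtain ⟨l, hl, hmin⟩ := exists_min_image S
    (fun l => #{x : ZMod q | IsUnit x ∧ F (l * x) ≠ f l * K x}) hS.nonempty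
  refine ⟨l, hl, ?_⟩
  have h1 : #S * #{x : ZMod q | IsUnit x ∧ F (l * x) ≠ f l * K x} ≤ #(defect q f F K L) := by
    rw [← smul_eq_mul]
    refine (card_nsmul_le_sum S _ _ hmin).trans ?_
    have : ∑ l ∈ S, #{x : ZMod q | IsUnit x ∧ F (l * x) ≠ f l * K x}
        = #{p ∈ S ×ˢ (univ : Finset (ZMod q)) | IsUnit p.2 ∧ F (p.1 * p.2) ≠ f p.1 * K p.2} := by
      simp only [card_filter, sum_product]
    rw [this]
    refine card_le_card fun p hp => ?_
    obtain ⟨hp1, hp2⟩ := mem_filter.mp hp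
    have hpS := (mem_product.mp hp1).1
    exact mem_filter.mpr ⟨mem_product.mpr ⟨mem_Icc.mpr ⟨hS.pos _ hpS, hS.le _ hpS⟩, mem_univ _⟩,
      hS.coprime _ hpS, hp2⟩
  have hpos := hS.nonempty.card_pos
  have h2 : #S * (#{x : ZMod q | IsUnit x ∧ F (l * x) ≠ f l * K x} * E) ≤ #S * (b * A * q) := by
    calc _ = #S * #{x : ZMod q | IsUnit x ∧ F (l * x) ≠ f l * K x} * E := by ring
      _ ≤ #(defect q f F K L) * E := Nat.mul_le_mul_right _ h1
      _ ≤ b * L * q := hK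
      _ ≤ b * (A * #S) * q := by gcongr; exact hS.le_card
      _ = _ := by ring
  exact Nat.le_of_mul_le_mul_left h2 hpos

/-- First failure mode: `n y` lies in the exceptional set. -/
lemma card_tuples_exc_le {q A N Y P : ℕ} [NeZero q] (h : ArithBound q A) (hN : N ≤ q ^ 5)
    {f : ℕ → ℤˣ} {F : ZMod q → ℤˣ} {S : Finset ℕ} (hS : ∀ l ∈ S, l.Coprime q) :
    #{t ∈ (univ : Finset (ZMod q)) ×ˢ (S ×ˢ Icc 1 Y) ×ˢ Icc 1 P |
      (t.2.1.2 : ZMod q) = t.2.1.1 * t.1 ∧ t.2.2 * t.2.1.2 ∈ excSet q f F N}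
      ≤ A * (#S * #(excSet q f F N)) := by
  rw [← card_product]
  refine card_le_mul_card_image_of_maps_to (f := fun t => (t.2.1.1, t.2.2 * t.2.1.2)) ?_ _ ?_
  · intro t ht
    simp only [mem_filter, mem_product] at ht
    exact mem_product.mpr ⟨ht.1.2.1.1, ht.2.2⟩
  · rintro ⟨l, z⟩ hlz
    obtain ⟨hl, hz⟩ := mem_product.mp hlz
    have hz' := (mem_filter.mp hz).1
    rw [mem_Icc] at hz'
    refine le_trans ?_ (h.divisors z hz'.1 (hz'.2.trans hN))
    refine card_le_card_of_injOn (fun t => t.2.1.2) ?_ ?_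
    · intro t ht
      simp only [coe_filter, mem_filter, Set.mem_ofPred_eq, Prod.mk.injEq] at ht
      simp only [SetLike.mem_coe, Nat.mem_divisors]
      exact ⟨⟨t.2.2, by rw [← ht.2.2]; ring⟩, by dsimp at hz'; omega⟩
    · intro t ht t' ht' e
      simp only [coe_filter, mem_filter, Set.mem_ofPred_eq, Prod.mk.injEq, mem_product,
        mem_Icc] at ht ht'
      obtain ⟨x, ⟨l1, y⟩, n⟩ := t
      obtain ⟨x', ⟨l1', y'⟩, n'⟩ := t'
      dsimp only at *
      obtain ⟨⟨⟨_, ⟨_, hy⟩, hn⟩, hx, _⟩, rfl, hz1⟩ := ht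
      obtain ⟨⟨⟨_, ⟨_, hy'⟩, hn'⟩, hx', _⟩, rfl, hz2⟩ := ht'
      subst e
      have : n = n' := Nat.eq_of_mul_eq_mul_right (by omega) (hz1.trans hz2.symm)
      subst this
      have hu : IsUnit (l1' : ZMod q) := (ZMod.isUnit_iff_coprime _ q).mpr (hS _ hl)
      rw [hx] at hx'
      rw [hu.mul_right_inj.mp (hx')]

/-- Second failure mode: `(l, n x)` belongs to the defect of `K`. -/
lemma card_tuples_defect_le {q A N Y P L : ℕ} [NeZero q] (h : ArithBound q A) (hN : N ≤ q ^ 5)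
    {f : ℕ → ℤˣ} {F K : ZMod q → ℤˣ} {S : Finset ℕ} (hYP : P * Y ≤ N) (c : ℕ)
    (hc : N = q * c) :
    #{t ∈ (univ : Finset (ZMod q)) ×ˢ (S ×ˢ Icc 1 Y) ×ˢ Icc 1 P |
      (t.2.1.2 : ZMod q) = t.2.1.1 * t.1 ∧ t.2.2.Coprime q ∧
        (t.2.1.1, (t.2.2 : ZMod q) * t.1) ∈ defect q f F K L}
      ≤ A * (#(defect q f F K L) * (c + 1)) := by
  have hq : 0 < q := NeZero.pos q
  have hqR : (0 : ℝ) < q := by exact_mod_cast hq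
  set T' := {p ∈ defect q f F K L ×ˢ Icc 1 N | ((p.2 : ℕ) : ZMod q) = p.1.1 * p.1.2} with hT'
  have hcard : #T' ≤ #(defect q f F K L) * (c + 1) := by
    rw [hT', card_filter, sum_product, ← smul_eq_mul]
    refine sum_le_card_nsmul _ _ _ fun p hp => ?_
    rw [← card_filter]
    have := card_modEq_Icc_le q N hq (p.1 * p.2)
    have e : (N : ℝ) / q = c := by rw [hc]; push_cast; field_simp
    rw [e] at this
    exact_mod_cast this
  refine le_trans ?_ (Nat.mul_le_mul_left A hcard)
  refine card_le_mul_card_image_of_maps_to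
    (f := fun t => ((t.2.1.1, (t.2.2 : ZMod q) * t.1), t.2.2 * t.2.1.2)) ?_ _ ?_
  · intro t ht
    obtain ⟨x, ⟨l, y⟩, n⟩ := t
    simp only [mem_filter, mem_product, mem_Icc] at ht
    obtain ⟨⟨_, ⟨_, hy⟩, hn⟩, hx, hnq, hd⟩ := ht
    simp only [hT', mem_filter, mem_product, mem_Icc]
    refine ⟨⟨hd, Nat.one_le_iff_ne_zero.mpr (Nat.mul_ne_zero (by omega) (by omega)),
      (Nat.mul_le_mul hn.2 hy.2).trans hYP⟩, ?_⟩
    push_cast; rw [hx]; ring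
  · rintro ⟨⟨l, x'⟩, z⟩ hlz
    have hz' := (mem_product.mp (mem_filter.mp hlz).1).2
    rw [mem_Icc] at hz'
    refine le_trans ?_ (h.divisors z hz'.1 (hz'.2.trans hN))
    refine card_le_card_of_injOn (fun t => t.2.2) ?_ ?_
    · intro t ht
      simp only [coe_filter, mem_filter, Set.mem_ofPred_eq, Prod.mk.injEq] at ht
      simp only [SetLike.mem_coe, Nat.mem_divisors]
      exact ⟨⟨t.2.1.2, by rw [← ht.2.2]⟩, by dsimp at hz'; omega⟩
    · intro t ht t' ht' e
      simp only [coe_filter, mem_filter, Set.mem_ofPred_eq, Prod.mk.injEq, mem_product,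
        mem_Icc] at ht ht'
      obtain ⟨x, ⟨l1, y⟩, n⟩ := t
      obtain ⟨x1, ⟨l1', y'⟩, n'⟩ := t'
      dsimp only at *
      obtain ⟨⟨⟨_, ⟨_, hy⟩, hn⟩, hx, hnq, _⟩, ⟨rfl, e1⟩, hz1⟩ := ht
      obtain ⟨⟨⟨_, ⟨_, hy'⟩, hn'⟩, hx', _⟩, ⟨rfl, e2⟩, hz2⟩ := ht'
      subst e
      have : y = y' := Nat.eq_of_mul_eq_mul_left (by omega) (hz1.trans hz2.symm)
      subst this
      have hu : IsUnit (n : ZMod q) := (ZMod.isUnit_iff_coprime _ q).mpr hnq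
      rw [← e2] at e1
      rw [hu.mul_right_inj.mp e1]

/-- The sizes that make `card_few_reps_le` applicable with `Y = N / P`. -/
lemma scale_bounds {q L E N P Y : ℕ} (hE2 : 2 ≤ E ^ 2) (hL : 0 < L)
    (hLq : L ^ 2 ≤ q) (hN : N = q * E ^ 8) (hP : 0 < P) (hPL : P ≤ L * E ^ 4) (hY : Y = N / P) :
    P * Y ≤ N ∧ 0 < Y ∧ N ≤ 2 * (Y * P) ∧ q * E ^ 2 ≤ L * Y ∧ L * E ^ 2 ≤ Y ∧
      q * E ^ 2 ≤ Y ^ 2 := by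
  have hE0 : 0 < E := by
    rcases Nat.eq_zero_or_pos E with h | h
    · rw [h] at hE2; omega
    · exact h
  have hPN : P ≤ N := by
    refine hPL.trans ?_
    calc L * E ^ 4 ≤ L ^ 2 * E ^ 8 :=
          Nat.mul_le_mul (Nat.le_self_pow (by norm_num) L)
            (Nat.pow_le_pow_right hE0 (by norm_num))
      _ ≤ N := by rw [hN]; exact Nat.mul_le_mul_right _ hLq
  have hPY : P * Y ≤ N := by rw [hY]; exact Nat.mul_div_le N P
  have hY0 : 0 < Y := by rw [hY]; exact Nat.div_pos hPN hP
  have hNY : N ≤ 2 * (Y * P) := by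
    have := Nat.lt_div_mul_add (a := N) hP
    rw [← hY] at this
    nlinarith
  have k1 : q * E ^ 4 ≤ 2 * (L * Y) := by
    have : q * E ^ 4 * E ^ 4 ≤ 2 * (L * Y) * E ^ 4 := by
      calc q * E ^ 4 * E ^ 4 = N := by rw [hN]; ring
        _ ≤ 2 * (Y * P) := hNY
        _ ≤ 2 * (Y * (L * E ^ 4)) := by gcongr
        _ = _ := by ring
    exact Nat.le_of_mul_le_mul_right this (by positivity)
  have h1 : q * E ^ 2 ≤ L * Y := by
    have : 2 * (q * E ^ 2) ≤ q * E ^ 4 := by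
      calc 2 * (q * E ^ 2) ≤ E ^ 2 * (q * E ^ 2) := Nat.mul_le_mul_right _ hE2
        _ = _ := by ring
    omega
  have h2 : L * E ^ 2 ≤ Y := by
    have : L * (L * E ^ 2) ≤ L * Y := by
      calc L * (L * E ^ 2) = L ^ 2 * E ^ 2 := by ring
        _ ≤ q * E ^ 2 := Nat.mul_le_mul_right _ hLq
        _ ≤ _ := h1
    exact Nat.le_of_mul_le_mul_left this hL
  have h3 : q * E ^ 2 ≤ Y ^ 2 := by
    calc q * E ^ 2 ≤ L * Y := h1
      _ ≤ Y * Y := Nat.mul_le_mul_right _ ((Nat.le_mul_of_pos_right L (by positivity)).trans h2)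
      _ = _ := by ring
  exact ⟨hPY, hY0, hNY, h1, h2, h3⟩

/-- Precomposing with a dilation by a unit `u`: from `F (u x) ≈ c * K x` and `K (n x) ≈ f n * s x`
one gets `F (n x) ≈ f n * (c * s (u⁻¹ x))`. -/
lemma card_defect_transfer {q P : ℕ} [NeZero q] {f : ℕ → ℤˣ} {F K s : ZMod q → ℤˣ}
    (u : (ZMod q)ˣ) (c : ℤˣ) :
    #(defect q f F (fun x => c * s (↑u⁻¹ * x)) P) ≤
      #(defect q f K s P) + P * #{x : ZMod q | IsUnit x ∧ F (u * x) ≠ c * K x} := by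
  set D2 := ({x : ZMod q | IsUnit x ∧ F (u * x) ≠ c * K x} : Finset (ZMod q)) with hD2
  set D := defect q f F (fun x => c * s (↑u⁻¹ * x)) P with hD
  have hD' : ∀ p ∈ D, p.1 ∈ Icc 1 P ∧ p.1.Coprime q ∧ IsUnit p.2 ∧
      F (p.1 * p.2) ≠ f p.1 * (c * s (↑u⁻¹ * p.2)) := by
    intro p hp
    simpa [hD, defect] using hp
  rw [← card_filter_add_card_filter_not (s := D)
    (fun p : ℕ × ZMod q => K (p.1 * (↑u⁻¹ * p.2)) ≠ f p.1 * s (↑u⁻¹ * p.2))]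
  refine Nat.add_le_add ?_ ?_
  · refine card_le_card_of_injOn (fun p => (p.1, ↑u⁻¹ * p.2)) ?_ ?_
    · rintro ⟨n, x⟩ hp
      obtain ⟨hp, hne⟩ := mem_filter.mp (mem_coe.mp hp)
      obtain ⟨hn, hnq, hx, -⟩ := hD' _ hp
      exact mem_coe.mpr (mem_filter.mpr ⟨mem_product.mpr ⟨hn, mem_univ _⟩, hnq,
        (u⁻¹).isUnit.mul hx, hne⟩)
    · rintro ⟨n, x⟩ _ ⟨n', x'⟩ _ e
      simp only [Prod.mk.injEq] at e
      rw [e.1, (u⁻¹).isUnit.mul_right_inj.mp e.2]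
  · have : P * #D2 = #(Icc 1 P ×ˢ D2) := by rw [card_product]; simp
    rw [this]
    refine card_le_card_of_injOn (fun p => (p.1, p.1 * (↑u⁻¹ * p.2))) ?_ ?_
    · rintro ⟨n, x⟩ hp
      obtain ⟨hp, hne⟩ := mem_filter.mp (mem_coe.mp hp)
      obtain ⟨hn, hnq, hx, hF⟩ := hD' _ hp
      have hnu : IsUnit (n : ZMod q) := (ZMod.isUnit_iff_coprime _ q).mpr hnq
      refine mem_coe.mpr (mem_product.mpr ⟨hn, ?_⟩)
      simp only [hD2, mem_filter, mem_univ, true_and]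
      refine ⟨hnu.mul ((u⁻¹).isUnit.mul hx), fun he => hF ?_⟩
      rw [not_not] at hne
      have e : (u : ZMod q) * (n * (↑u⁻¹ * x)) = n * x := by
        rw [mul_left_comm, Units.mul_inv_cancel_left]
      rw [hne, e] at he
      rw [he, mul_left_comm]
    · rintro ⟨n, x⟩ hp ⟨n', x'⟩ _ e
      have hnq := (hD' _ (mem_filter.mp (mem_coe.mp hp)).1).2.1
      have hnu : IsUnit (n : ZMod q) := (ZMod.isUnit_iff_coprime _ q).mpr hnq
      simp only [Prod.mk.injEq] at e
      obtain ⟨rfl, e⟩ := e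
      rw [(u⁻¹).isUnit.mul_right_inj.mp (hnu.mul_right_inj.mp e)]

/-- A typical class `x` is of the form `y / l`, so that `F (n y) = f (n y)` forces
`K (n x) = f n * (f l * f y)` for most `n`. -/
lemma exists_approx_of_approx_aux {q A L E b g P : ℕ} [NeZero q] (h : ArithBound q A)
    {f : ℕ → ℤˣ} (hf : ∀ m n, m ≠ 0 → n ≠ 0 → f (m * n) = f m * f n) {F K : ZMod q → ℤˣ}
    {S : Finset ℕ} (hS : IsDilationSet q A L S) (hL : 0 < L) (hLq : L ^ 2 ≤ q) (hE : 9 * A ≤ E)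
    (hN : q * E ^ 8 ≤ q ^ 5) (hexc : #(excSet q f F (q * E ^ 8)) * E ≤ g * (q * E ^ 8))
    (hK : #(defect q f F K L) * E ≤ b * L * q) (hP : 0 < P) (hPL : P ≤ L * E ^ 4) :
    ∃ s, #(defect q f K s P) * E ≤ (4 * A * (g + 2 * A * b) + 1) * P * q := by
  have hA := h.hundred_le
  have hq : 0 < q := NeZero.pos q
  have hE0 : 0 < E := by omega
  set N := q * E ^ 8 with hNdef
  set Y := N / P with hYdef
  obtain ⟨hPY, hY, hNY, h1, h2, h3⟩ :=
    scale_bounds (by nlinarith) hL hLq hNdef hP hPL hYdef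
  have hexcX := card_few_reps_le hS hL hY hA hE h1 h2 h3
  set Z := ({x : ZMod q | 2 * q * #(reps q Y S x) < #S * Y} : Finset (ZMod q)) with hZ
  set X := ({x : ZMod q | IsUnit x ∧ ¬ 2 * q * #(reps q Y S x) < #S * Y} : Finset (ZMod q)) with hX
  -- the `n ≤ P` at which a given representation `x = y / l` fails to determine `K (n x)`
  set w : ZMod q → ℕ × ℕ → ℕ := fun x p => #{n ∈ Icc 1 P | n.Coprime q ∧
    (n * p.2 ∈ excSet q f F N ∨ (p.1, (n : ZMod q) * x) ∈ defect q f F K L)} with hw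
  have hm := hS.nonempty.card_pos
  obtain ⟨σ, hσ, hσw⟩ := exists_choice_sum_le X (reps q Y S) (#S * Y) (2 * q) (by positivity)
    (fun x hx => by have := (mem_filter.mp hx).2.2; omega) w
  set W := ∑ x ∈ X, w x (σ x) with hW
  have htot : ∑ x ∈ X, ∑ i ∈ reps q Y S x, w x i ≤
      A * (#S * #(excSet q f F N)) + A * (#(defect q f F K L) * (E ^ 8 + 1)) := by
    refine le_trans ?_ (Nat.add_le_add
      (card_tuples_exc_le (Y := Y) (P := P) h hN (f := f) (F := F) hS.coprime)
      (card_tuples_defect_le (L := L) h hN (f := f) (F := F) (K := K) (S := S) hPY (E ^ 8) hNdef))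
    refine le_trans ?_ (card_union_le _ _)
    calc ∑ x ∈ X, ∑ i ∈ reps q Y S x, w x i ≤ ∑ x : ZMod q, ∑ i ∈ reps q Y S x, w x i :=
          sum_le_sum_of_subset (subset_univ _)
      _ = #{t ∈ (univ : Finset (ZMod q)) ×ˢ (S ×ˢ Icc 1 Y) ×ˢ Icc 1 P |
            (t.2.1.2 : ZMod q) = t.2.1.1 * t.1 ∧ (t.2.2.Coprime q ∧
            (t.2.2 * t.2.1.2 ∈ excSet q f F N ∨
              (t.2.1.1, (t.2.2 : ZMod q) * t.1) ∈ defect q f F K L))} := by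
          rw [card_filter, sum_product]
          refine sum_congr rfl fun x _ => ?_
          rw [reps, sum_filter, sum_product (s := S ×ˢ Icc 1 Y)]
          refine sum_congr rfl fun p _ => ?_
          simp only [hw]
          split_ifs with hp
          · simp only [hp, true_and, card_filter]
          · simp [hp]
      _ ≤ _ := by
          refine card_le_card fun t ht => ?_
          obtain ⟨ht1, ht2, ht3, ht4⟩ := mem_filter.mp ht
          rcases ht4 with h' | h'
          · exact mem_union_left _ (mem_filter.mpr ⟨ht1, ht2, h'⟩)
          · exact mem_union_right _ (mem_filter.mpr ⟨ht1, ht2, ht3, h'⟩)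
  have hWE : W * E ≤ 4 * A * (g + 2 * A * b) * P * q := by
    have : (#S * Y) * (W * E) ≤ (#S * Y) * (4 * A * (g + 2 * A * b) * P * q) := by
      have hE8 : E ^ 8 + 1 ≤ 2 * E ^ 8 := by
        have : 1 ≤ E ^ 8 := Nat.one_le_pow _ _ hE0
        omega
      calc (#S * Y) * (W * E) = (#S * Y * W) * E := by ring
        _ ≤ (2 * q * ∑ x ∈ X, ∑ i ∈ reps q Y S x, w x i) * E := Nat.mul_le_mul_right _ hσw
        _ ≤ (2 * q * (A * (#S * #(excSet q f F N)) + A * (#(defect q f F K L) * (2 * E ^ 8)))) * E := by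
            gcongr
            exact htot.trans (by gcongr)
        _ = 2 * q * A * (#S * (#(excSet q f F N) * E)
            + 2 * E ^ 8 * (#(defect q f F K L) * E)) := by ring
        _ ≤ 2 * q * A * (#S * (g * N) + 2 * E ^ 8 * (b * L * q)) :=
            Nat.mul_le_mul_left _ (Nat.add_le_add (Nat.mul_le_mul_left _ hexc)
              (Nat.mul_le_mul_left _ hK))
        _ ≤ 2 * q * A * (#S * (g * N) + 2 * E ^ 8 * (b * (A * #S) * q)) := by
            gcongr
            exact hS.le_card
        _ = 2 * q * A * #S * (g + 2 * A * b) * N := by rw [hNdef]; ring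
        _ ≤ 2 * q * A * #S * (g + 2 * A * b) * (2 * (Y * P)) := by gcongr
        _ = _ := by ring
    exact Nat.le_of_mul_le_mul_left this (by positivity)
  set s : ZMod q → ℤˣ := fun x => f (σ x).1 * f (σ x).2 with hs
  set D1 := defect q f K s P with hD1
  have hD1card : #D1 ≤ W + P * #Z := by
    have : D1 ⊆ {p ∈ Icc 1 P ×ˢ X | p.1.Coprime q ∧ (p.1 * (σ p.2).2 ∈ excSet q f F N ∨
        ((σ p.2).1, (p.1 : ZMod q) * p.2) ∈ defect q f F K L)} ∪ Icc 1 P ×ˢ Z := by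
      rintro ⟨n, x⟩ hp
      simp only [hD1, defect, mem_filter, mem_product, mem_univ, and_true] at hp
      obtain ⟨hn, hnq, hx, hne⟩ := hp
      by_cases hxZ : 2 * q * #(reps q Y S x) < #S * Y
      · exact mem_union_right _ (mem_product.mpr ⟨hn, by simp [hZ, hxZ]⟩)
      · have hxX : x ∈ X := mem_filter.mpr ⟨mem_univ _, hx, hxZ⟩
        refine mem_union_left _ (mem_filter.mpr ⟨mem_product.mpr ⟨hn, hxX⟩, hnq, ?_⟩)
        have hR := hσ x hxX
        simp only [reps, mem_filter, mem_product] at hR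
        obtain ⟨⟨hlS, hy⟩, hyx⟩ := hR
        rw [mem_Icc] at hn hy
        dsimp only at *
        have hlu : IsUnit ((σ x).1 : ZMod q) :=
          (ZMod.isUnit_iff_coprime _ q).mpr (hS.coprime _ hlS)
        have hyu : IsUnit ((σ x).2 : ZMod q) := by rw [hyx]; exact hlu.mul hx
        have hyq : (σ x).2.Coprime q := (ZMod.isUnit_iff_coprime _ q).mp hyu
        have hnu : IsUnit (n : ZMod q) := (ZMod.isUnit_iff_coprime _ q).mpr hnq
        by_contra hcon
        rw [not_or] at hcon
        apply hne
        -- `F` at the class of `n y = l n x`, computed once as `f (n y)` and once as `f l * K (n x)`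
        have c1 : F ((n * (σ x).2 : ℕ) : ZMod q) = f (n * (σ x).2) := by
          by_contra hc
          exact hcon.1 (mem_filter.mpr ⟨mem_Icc.mpr ⟨Nat.one_le_iff_ne_zero.mpr
            (Nat.mul_ne_zero (by omega) (by omega)), (Nat.mul_le_mul hn.2 hy.2).trans hPY⟩,
            Nat.Coprime.mul_left hnq hyq, hc⟩)
        have c2 : F ((σ x).1 * ((n : ZMod q) * x)) = f (σ x).1 * K ((n : ZMod q) * x) := by
          by_contra hc
          exact hcon.2 (mem_filter.mpr ⟨mem_product.mpr ⟨mem_Icc.mpr ⟨hS.pos _ hlS, hS.le _ hlS⟩,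
            mem_univ _⟩, hS.coprime _ hlS, hnu.mul hx, hc⟩)
        have e : ((n * (σ x).2 : ℕ) : ZMod q) = (σ x).1 * ((n : ZMod q) * x) := by
          push_cast; rw [hyx]; ring
        rw [e, c2, hf _ _ (by omega) (by omega)] at c1
        rw [eq_comm, int_units_eq_iff] at c1
        simp only [hs]
        rw [← c1]
        rw [mul_left_comm]
    refine (card_le_card this).trans ((card_union_le _ _).trans ?_)
    rw [card_product (Icc 1 P) Z, Nat.card_Icc, Nat.add_sub_cancel]
    refine Nat.add_le_add_right (le_of_eq ?_) _
    rw [card_filter, sum_product_right, hW]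
    refine sum_congr rfl fun x _ => ?_
    simp only [hw, card_filter]
  refine ⟨s, ?_⟩
  calc #D1 * E ≤ (W + P * #Z) * E := Nat.mul_le_mul_right _ hD1card
    _ = W * E + P * (#Z * E) := by ring
    _ ≤ 4 * A * (g + 2 * A * b) * P * q + P * q := Nat.add_le_add hWE (Nat.mul_le_mul_left _ hexcX)
    _ = _ := by ring

/-- Multiplying the size of the box by up to `E ^ 4`: an approximate equation at scale `L` gives one
at every scale `P ≤ L * E ^ 4`. -/
lemma exists_approx_of_approx {q A L E b g P : ℕ} [NeZero q] (h : ArithBound q A) {f : ℕ → ℤˣ}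
    (hf : ∀ m n, m ≠ 0 → n ≠ 0 → f (m * n) = f m * f n) {F K : ZMod q → ℤˣ} {S : Finset ℕ}
    (hS : IsDilationSet q A L S) (hL : 0 < L) (hLq : L ^ 2 ≤ q) (hE : 9 * A ≤ E)
    (hN : q * E ^ 8 ≤ q ^ 5) (hexc : #(excSet q f F (q * E ^ 8)) * E ≤ g * (q * E ^ 8))
    (hK : #(defect q f F K L) * E ≤ b * L * q) (hP : 0 < P) (hPL : P ≤ L * E ^ 4) :
    ∃ K', #(defect q f F K' P) * E ≤ A ^ 4 * (b + g + 1) * P * q := by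
  have hA := h.hundred_le
  obtain ⟨s, hs⟩ := exists_approx_of_approx_aux h hf hS hL hLq hE hN hexc hK hP hPL
  obtain ⟨l₀, hl₀, hl₀card⟩ := exists_good_dilation hS hK
  obtain ⟨u, hu⟩ : IsUnit (l₀ : ZMod q) := (ZMod.isUnit_iff_coprime _ q).mpr (hS.coprime _ hl₀)
  rw [← hu] at hl₀card
  refine ⟨fun x => f l₀ * s (↑u⁻¹ * x), ?_⟩
  have hA1 : 4 * A ≤ A ^ 4 := by
    calc 4 * A ≤ A ^ 3 * A := by gcongr; nlinarith [Nat.pow_le_pow_left hA 3]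
      _ = _ := by ring
  have hA2 : 8 * A ^ 2 + A ≤ A ^ 4 := by
    calc 8 * A ^ 2 + A ≤ A ^ 2 * A ^ 2 := by nlinarith
      _ = _ := by ring
  have hA3 : 1 ≤ A ^ 4 := Nat.one_le_pow _ _ (by omega)
  calc #(defect q f F (fun x => f l₀ * s (↑u⁻¹ * x)) P) * E
      ≤ (#(defect q f K s P) + P * #{x : ZMod q | IsUnit x ∧ F (u * x) ≠ f l₀ * K x}) * E :=
        Nat.mul_le_mul_right _ (card_defect_transfer u (f l₀))
    _ = #(defect q f K s P) * E
        + P * (#{x : ZMod q | IsUnit x ∧ F (u * x) ≠ f l₀ * K x} * E) := by ring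
    _ ≤ (4 * A * (g + 2 * A * b) + 1) * P * q + P * (b * A * q) :=
        Nat.add_le_add hs (Nat.mul_le_mul_left _ hl₀card)
    _ = (4 * A * g + (8 * A ^ 2 + A) * b + 1) * P * q := by ring
    _ ≤ (A ^ 4 * g + A ^ 4 * b + A ^ 4) * P * q := by gcongr
    _ = _ := by ring

/-! ### Dilations acting by signs -/

/-- Approximate equations at all scales up to `E ^ (J + 4)`, where `E ^ (2 * J) ≤ q`. -/
lemma exists_approx_all {q A E g J : ℕ} [NeZero q] (h : ArithBound q A) {f : ℕ → ℤˣ}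
    (hf : ∀ m n, m ≠ 0 → n ≠ 0 → f (m * n) = f m * f n) {F : ZMod q → ℤˣ}
    (hE : A ^ 2 ≤ E) (hN : q * E ^ 8 ≤ q ^ 5)
    (hexc : #(excSet q f F (q * E ^ 8)) * E ≤ g * (q * E ^ 8)) (hJ : E ^ (2 * J) ≤ q) (P : ℕ)
    (hP : 0 < P) (hPJ : P ≤ E ^ (J + 4)) :
    ∃ K, #(defect q f F K P) * E ≤ A ^ (5 * J + 5) * (g + 1) * P * q := by
  have hA := h.hundred_le
  have hq : 0 < q := NeZero.pos q
  have hE0 : 0 < E := by nlinarith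
  have hE9 : 9 * A ≤ E := by nlinarith
  have step : ∀ j ≤ J, ∀ K, #(defect q f F K (E ^ j)) * E ≤ A ^ (5 * j) * (g + 1) * E ^ j * q →
      ∀ P, 0 < P → P ≤ E ^ j * E ^ 4 →
      ∃ K', #(defect q f F K' P) * E ≤ A ^ (5 * (j + 1)) * (g + 1) * P * q := by
    intro j hj K hK P hP hPj
    have hjq : (E ^ j) ^ 2 ≤ q := by
      rw [← pow_mul, mul_comm]
      exact (Nat.pow_le_pow_right hE0 (by omega)).trans hJ
    have hS : ∃ S, IsDilationSet q A (E ^ j) S := by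
      rcases Nat.eq_zero_or_pos j with rfl | hj0
      · exact ⟨{1}, by simpa using isDilationSet_one q A (by omega)⟩
      · refine exists_isDilationSet hq h (hE.trans (Nat.le_self_pow (by omega) E)) ?_
        calc E ^ j ≤ (E ^ j) ^ 2 := Nat.le_self_pow (by norm_num) _
          _ ≤ q := hjq
          _ ≤ q ^ 5 := Nat.le_self_pow (by norm_num) q
    obtain ⟨S, hS⟩ := hS
    obtain ⟨K', hK'⟩ := exists_approx_of_approx h hf hS (by positivity) hjq hE9 hN hexc hK hP hPj
    have h1 : g + 1 ≤ A ^ (5 * j) * (g + 1) := Nat.le_mul_of_pos_left _ (by positivity)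
    have key : A ^ 4 * (A ^ (5 * j) * (g + 1) + g + 1) ≤ A ^ (5 * (j + 1)) * (g + 1) := by
      calc A ^ 4 * (A ^ (5 * j) * (g + 1) + g + 1)
          ≤ A ^ 4 * (2 * (A ^ (5 * j) * (g + 1))) := Nat.mul_le_mul_left _ (by omega)
        _ = 2 * (A ^ 4 * A ^ (5 * j) * (g + 1)) := by ring
        _ ≤ A * (A ^ 4 * A ^ (5 * j) * (g + 1)) := Nat.mul_le_mul_right _ (by omega)
        _ = _ := by ring
    exact ⟨K', hK'.trans (Nat.mul_le_mul_right _ (Nat.mul_le_mul_right _ key))⟩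
  have all : ∀ j ≤ J, ∃ K, #(defect q f F K (E ^ j)) * E ≤ A ^ (5 * j) * (g + 1) * E ^ j * q := by
    intro j
    induction j with
    | zero =>
      intro _
      -- at scale `1` only `n = 1` occurs, and `K = F` is an exact solution
      refine ⟨F, ?_⟩
      have h1 : f 1 = 1 := by
        have := hf 1 1 (by norm_num) (by norm_num)
        simpa using this
      have : defect q f F F (E ^ 0) = ∅ := by
        rw [defect, filter_eq_empty_iff]
        rintro ⟨n, x⟩ hp
        simp only [mem_product, mem_Icc, pow_zero] at hp
        have : n = 1 := by omega
        subst this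
        simp [h1]
      rw [this]; simp
    | succ j ih =>
      intro hj
      obtain ⟨K, hK⟩ := ih (by omega)
      exact step j (by omega) K hK (E ^ (j + 1)) (by positivity) (by
        rw [pow_succ]; gcongr; exact Nat.le_self_pow (by norm_num) E)
  obtain ⟨K, hK⟩ := all J le_rfl
  exact step J le_rfl K hK P hP (by rwa [← pow_add])

lemma card_isUnit (q : ℕ) [NeZero q] : #{x : ZMod q | IsUnit x} = q.totient := by
  rw [← ZMod.card_units_eq_totient, ← card_univ]
  have : ({x : ZMod q | IsUnit x} : Finset (ZMod q)) = (univ : Finset (ZMod q)ˣ).image Units.val := by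
    ext x
    simp only [mem_filter, mem_univ, true_and, mem_image]
    exact Iff.rfl
  rw [this, card_image_of_injective _ Units.val_injective]

/-- Each `φ d` with `d ∣ q` is at most `φ q`, and `∑ φ d = q`. -/
lemma le_mul_totient {q A : ℕ} (hq : 0 < q) (h : ArithBound q A) : q ≤ A * q.totient := by
  calc q = ∑ d ∈ q.divisors, d.totient := (Nat.sum_totient q).symm
    _ ≤ #q.divisors * q.totient := by
        rw [← smul_eq_mul]
        exact sum_le_card_nsmul _ _ _ fun d hd =>
          Nat.le_of_dvd (Nat.totient_pos.mpr hq)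
            (Nat.totient_dvd_of_dvd (Nat.mem_divisors.mp hd).1)
    _ ≤ _ := Nat.mul_le_mul_right _ (h.divisors q hq (Nat.le_self_pow (by norm_num) q))

lemma card_dilate_le {q : ℕ} [NeZero q] (u : (ZMod q)ˣ) (T : ZMod q → Prop) :
    #{x : ZMod q | IsUnit x ∧ T (u * x)} ≤ #{x : ZMod q | IsUnit x ∧ T x} := by
  refine card_le_card_of_injOn (fun x => u * x) (fun x hx => ?_) ?_
  · simp only [coe_filter, mem_univ, true_and, Set.mem_ofPred_eq] at hx ⊢
    exact ⟨u.isUnit.mul hx.1, hx.2⟩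
  · intro x _ x' _ e
    exact u.isUnit.mul_right_inj.mp e

/-- For most classes `z`, the functions `x ↦ K (z x)` and `K'` agree up to a sign. -/
lemma exists_sign_of_approx {q A L E B P : ℕ} [NeZero q] (hA : 100 ≤ A) (hE : 9 * A ≤ E)
    {f : ℕ → ℤˣ} {F K K' : ZMod q → ℤˣ} {S : Finset ℕ} (hS : IsDilationSet q A L S) (hL : 0 < L)
    (hK : #(defect q f F K L) * E ≤ B * L * q) (hP : 0 < P)
    (hK' : #(defect q f F K' P) * E ≤ B * P * q)
    (h1 : q * E ^ 2 ≤ L * P) (h2 : L * E ^ 2 ≤ P) (h3 : q * E ^ 2 ≤ P ^ 2) :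
    ∃ c : ZMod q → ℤˣ, #{z : ZMod q | IsUnit z ∧
      q < A ^ 2 * #{x : ZMod q | IsUnit x ∧ K (z * x) ≠ c z * K' x}} * E
        ≤ (4 * A ^ 3 * B + 1) * q := by
  have hq : 0 < q := NeZero.pos q
  have hexcX := card_few_reps_le hS hL hP hA hE h1 h2 h3
  set Z := ({x : ZMod q | 2 * q * #(reps q P S x) < #S * P} : Finset (ZMod q)) with hZ
  set X := ({x : ZMod q | IsUnit x ∧ ¬ 2 * q * #(reps q P S x) < #S * P} : Finset (ZMod q)) with hX
  -- the `x` at which a given representation `z = n / l` fails to relate `K (z x)` to `K' x`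
  set w : ZMod q → ℕ × ℕ → ℕ := fun z p => #{x : ZMod q | IsUnit x ∧
    ((p.1, z * x) ∈ defect q f F K L ∨ (p.2, x) ∈ defect q f F K' P)} with hw
  have hm := hS.nonempty.card_pos
  obtain ⟨σ, hσ, hσw⟩ := exists_choice_sum_le X (reps q P S) (#S * P) (2 * q) (by positivity)
    (fun x hx => by have := (mem_filter.mp hx).2.2; omega) w
  set W := ∑ x ∈ X, w x (σ x) with hW
  have htot : ∑ x ∈ X, ∑ i ∈ reps q P S x, w x i ≤
      P * #(defect q f F K L) + #S * #(defect q f F K' P) := by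
    have e1 : #{t ∈ (univ : Finset (ZMod q)) ×ˢ (S ×ˢ Icc 1 P) ×ˢ (univ : Finset (ZMod q)) |
        IsUnit t.1 ∧ (t.2.1.2 : ZMod q) = t.2.1.1 * t.1 ∧ (t.2.1.1, t.1 * t.2.2) ∈ defect q f F K L}
        ≤ P * #(defect q f F K L) := by
      have : P * #(defect q f F K L) = #(Icc 1 P ×ˢ defect q f F K L) := by
        rw [card_product]; simp
      rw [this]
      refine card_le_card_of_injOn (fun t => (t.2.1.2, (t.2.1.1, t.1 * t.2.2))) ?_ ?_
      · rintro ⟨z, ⟨l, n⟩, x⟩ ht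
        simp only [coe_filter, Set.mem_ofPred_eq, mem_product] at ht
        exact mem_coe.mpr (mem_product.mpr ⟨ht.1.2.1.2, ht.2.2.2⟩)
      · rintro ⟨z, ⟨l, n⟩, x⟩ ht ⟨z', ⟨l', n'⟩, x'⟩ ht' e
        simp only [coe_filter, Set.mem_ofPred_eq, mem_product] at ht ht'
        simp only [Prod.mk.injEq] at e
        obtain ⟨rfl, rfl, e⟩ := e
        have hlu : IsUnit (l : ZMod q) := (ZMod.isUnit_iff_coprime _ q).mpr (hS.coprime _ ht.1.2.1.1)
        have hz : z = z' := hlu.mul_right_inj.mp (ht.2.2.1.symm.trans ht'.2.2.1)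
        subst hz
        rw [ht.2.1.mul_right_inj.mp e]
    have e2 : #{t ∈ (univ : Finset (ZMod q)) ×ˢ (S ×ˢ Icc 1 P) ×ˢ (univ : Finset (ZMod q)) |
        IsUnit t.1 ∧ (t.2.1.2 : ZMod q) = t.2.1.1 * t.1 ∧ (t.2.1.2, t.2.2) ∈ defect q f F K' P}
        ≤ #S * #(defect q f F K' P) := by
      rw [← card_product]
      refine card_le_card_of_injOn (fun t => (t.2.1.1, (t.2.1.2, t.2.2))) ?_ ?_
      · rintro ⟨z, ⟨l, n⟩, x⟩ ht
        simp only [coe_filter, Set.mem_ofPred_eq, mem_product] at ht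
        exact mem_coe.mpr (mem_product.mpr ⟨ht.1.2.1.1, ht.2.2.2⟩)
      · rintro ⟨z, ⟨l, n⟩, x⟩ ht ⟨z', ⟨l', n'⟩, x'⟩ ht' e
        simp only [coe_filter, Set.mem_ofPred_eq, mem_product] at ht ht'
        simp only [Prod.mk.injEq] at e
        obtain ⟨rfl, rfl, rfl⟩ := e
        have hlu : IsUnit (l : ZMod q) := (ZMod.isUnit_iff_coprime _ q).mpr (hS.coprime _ ht.1.2.1.1)
        rw [hlu.mul_right_inj.mp (ht.2.2.1.symm.trans ht'.2.2.1)]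
    refine le_trans ?_ (Nat.add_le_add e1 e2)
    refine le_trans ?_ (card_union_le _ _)
    calc ∑ x ∈ X, ∑ i ∈ reps q P S x, w x i
        ≤ ∑ x : ZMod q, ∑ i ∈ reps q P S x, if IsUnit x then w x i else 0 := by
          refine le_trans (sum_le_sum fun x hx => ?_) (sum_le_sum_of_subset (subset_univ X))
          simp only [(mem_filter.mp hx).2.1, if_true, le_refl]
      _ = #{t ∈ (univ : Finset (ZMod q)) ×ˢ (S ×ˢ Icc 1 P) ×ˢ (univ : Finset (ZMod q)) |
            (t.2.1.2 : ZMod q) = t.2.1.1 * t.1 ∧ IsUnit t.1 ∧ (IsUnit t.2.2 ∧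
            ((t.2.1.1, t.1 * t.2.2) ∈ defect q f F K L ∨
              (t.2.1.2, t.2.2) ∈ defect q f F K' P))} := by
          rw [card_filter, sum_product]
          refine sum_congr rfl fun x _ => ?_
          split_ifs with hx
          · rw [reps, sum_filter, sum_product (s := S ×ˢ Icc 1 P)]
            refine sum_congr rfl fun p _ => ?_
            simp only [hw]
            split_ifs with hp
            · simp only [hp, hx, true_and, card_filter]
            · simp [hp]
          · simp [hx]
      _ ≤ _ := by
          refine card_le_card fun t ht => ?_
          obtain ⟨ht1, ht2, ht3, _, ht4⟩ := mem_filter.mp ht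
          rcases ht4 with h' | h'
          · exact mem_union_left _ (mem_filter.mpr ⟨ht1, ht3, ht2, h'⟩)
          · exact mem_union_right _ (mem_filter.mpr ⟨ht1, ht3, ht2, h'⟩)
  have hWE : W * E ≤ 4 * A * B * q ^ 2 := by
    have : (#S * P) * (W * E) ≤ (#S * P) * (4 * A * B * q ^ 2) := by
      calc (#S * P) * (W * E) = (#S * P * W) * E := by ring
        _ ≤ (2 * q * (P * #(defect q f F K L) + #S * #(defect q f F K' P))) * E :=
            Nat.mul_le_mul_right _ (hσw.trans (Nat.mul_le_mul_left _ htot))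
        _ = 2 * q * (P * (#(defect q f F K L) * E) + #S * (#(defect q f F K' P) * E)) := by ring
        _ ≤ 2 * q * (P * (B * L * q) + #S * (B * P * q)) :=
            Nat.mul_le_mul_left _ (Nat.add_le_add (Nat.mul_le_mul_left _ hK)
              (Nat.mul_le_mul_left _ hK'))
        _ ≤ 2 * q * (P * (B * (A * #S) * q) + A * (#S * (B * P * q))) := by
            refine Nat.mul_le_mul_left _ (Nat.add_le_add (Nat.mul_le_mul_left _ ?_) ?_)
            · exact Nat.mul_le_mul_right _ (Nat.mul_le_mul_left _ hS.le_card)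
            · exact Nat.le_mul_of_pos_left _ (by omega)
        _ = _ := by ring
    exact Nat.le_of_mul_le_mul_left this (by positivity)
  refine ⟨fun z => f (σ z).1 * f (σ z).2, ?_⟩
  have hle : ∀ z ∈ X, #{x : ZMod q | IsUnit x ∧ K (z * x) ≠ f (σ z).1 * f (σ z).2 * K' x}
      ≤ w z (σ z) := by
    intro z hz
    refine card_le_card fun x hx => ?_
    simp only [mem_filter, mem_univ, true_and] at hx ⊢
    obtain ⟨hx, hne⟩ := hx
    refine ⟨hx, ?_⟩
    have hzu : IsUnit z := (mem_filter.mp hz).2.1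
    have hR := hσ z hz
    simp only [reps, mem_filter, mem_product] at hR
    obtain ⟨⟨hlS, hn⟩, hnz⟩ := hR
    have hlu : IsUnit ((σ z).1 : ZMod q) := (ZMod.isUnit_iff_coprime _ q).mpr (hS.coprime _ hlS)
    have hnu : IsUnit ((σ z).2 : ZMod q) := by rw [hnz]; exact hlu.mul hzu
    by_contra hcon
    rw [not_or] at hcon
    apply hne
    -- `F` at the class `n x = l (z x)`, computed once as `f l * K (z x)` and once from row `n`
    have c1 : F ((σ z).1 * (z * x)) = f (σ z).1 * K (z * x) := by
      by_contra hc
      exact hcon.1 (mem_filter.mpr ⟨mem_product.mpr ⟨mem_Icc.mpr ⟨hS.pos _ hlS, hS.le _ hlS⟩,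
        mem_univ _⟩, hS.coprime _ hlS, hzu.mul hx, hc⟩)
    have c2 : F ((σ z).2 * x) = f (σ z).2 * K' x := by
      by_contra hc
      exact hcon.2 (mem_filter.mpr ⟨mem_product.mpr ⟨hn, mem_univ _⟩,
        (ZMod.isUnit_iff_coprime _ q).mp hnu, hx, hc⟩)
    rw [hnz, mul_assoc, c1, eq_comm, int_units_eq_iff] at c2
    rw [← c2, mul_assoc]
  set T := ({z : ZMod q | IsUnit z ∧ q < A ^ 2 *
    #{x : ZMod q | IsUnit x ∧ K (z * x) ≠ f (σ z).1 * f (σ z).2 * K' x}} : Finset (ZMod q)) with hT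
  have hTX : #(T ∩ X) * q ≤ A ^ 2 * W := by
    rw [hW, mul_sum, ← smul_eq_mul]
    refine (card_nsmul_le_sum _ (fun z => A ^ 2 * w z (σ z)) _ fun z hz => ?_).trans
      (sum_le_sum_of_subset inter_subset_right)
    obtain ⟨hz1, hz2⟩ := mem_inter.mp hz
    exact (mem_filter.mp hz1).2.2.le.trans (Nat.mul_le_mul_left _ (hle z hz2))
  have hTsub : T ⊆ (T ∩ X) ∪ Z := by
    intro z hz
    by_cases hzZ : 2 * q * #(reps q P S z) < #S * P
    · exact mem_union_right _ (mem_filter.mpr ⟨mem_univ _, hzZ⟩)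
    · exact mem_union_left _ (mem_inter.mpr ⟨hz, mem_filter.mpr ⟨mem_univ _,
        (mem_filter.mp hz).2.1, hzZ⟩⟩)
  have hTc := (card_le_card hTsub).trans (card_union_le _ _)
  have hTXE : #(T ∩ X) * E ≤ 4 * A ^ 3 * B * q := by
    have : q * (#(T ∩ X) * E) ≤ q * (4 * A ^ 3 * B * q) := by
      calc q * (#(T ∩ X) * E) = #(T ∩ X) * q * E := by ring
        _ ≤ A ^ 2 * W * E := Nat.mul_le_mul_right _ hTX
        _ = A ^ 2 * (W * E) := by ring
        _ ≤ A ^ 2 * (4 * A * B * q ^ 2) := Nat.mul_le_mul_left _ hWE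
        _ = _ := by ring
    exact Nat.le_of_mul_le_mul_left this hq
  calc #T * E ≤ (#(T ∩ X) + #Z) * E := Nat.mul_le_mul_right _ hTc
    _ = #(T ∩ X) * E + #Z * E := by ring
    _ ≤ 4 * A ^ 3 * B * q + q := Nat.add_le_add hTXE hexcX
    _ = _ := by ring

/-- A sign function on the reduced classes which is multiplied by an approximate sign under each
dilation comes from a character: the sign is unique, hence multiplicative in the dilation. -/
lemma exists_hom_of_dilation {q : ℕ} [NeZero q] {F : ZMod q → ℤˣ}
    (H : ∀ u : (ZMod q)ˣ, ∃ c : ℤˣ,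
      3 * #{x : ZMod q | IsUnit x ∧ F (u * x) ≠ c * F x} < q.totient) :
    ∃ χ : (ZMod q)ˣ →* ℤˣ, ∀ u : (ZMod q)ˣ,
      3 * #{x : ZMod q | IsUnit x ∧ F (u * x) ≠ χ u * F x} < q.totient := by
  choose c hc using H
  refine ⟨MonoidHom.mk' c fun u v => ?_, hc⟩
  have h3 : 3 * #{x : ZMod q | IsUnit x ∧ F (u * (v * x)) ≠ c u * F (v * x)} < q.totient := by
    refine lt_of_le_of_lt (Nat.mul_le_mul_left 3 ?_) (hc u)
    convert card_dilate_le v (fun y => F (u * y) ≠ c u * F y)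
  by_contra hne
  have : ({x : ZMod q | IsUnit x} : Finset (ZMod q)) ⊆
      ({x : ZMod q | IsUnit x ∧ F ((u * v : (ZMod q)ˣ) * x) ≠ c (u * v) * F x} : Finset (ZMod q)) ∪
      ({x : ZMod q | IsUnit x ∧ F (v * x) ≠ c v * F x} : Finset (ZMod q)) ∪
      ({x : ZMod q | IsUnit x ∧ F (u * (v * x)) ≠ c u * F (v * x)} : Finset (ZMod q)) := by
    intro x hx
    have hx := (mem_filter.mp hx).2
    by_contra hcon
    simp only [mem_union, not_or, mem_filter, mem_univ, true_and, hx, not_not] at hcon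
    obtain ⟨⟨e1, e2⟩, e3⟩ := hcon
    rw [Units.val_mul, mul_assoc, e3, e2, ← mul_assoc] at e1
    exact hne (mul_right_cancel e1).symm
  have h4 := (card_le_card this).trans (card_union_le _ _)
  have h5 := h4.trans (Nat.add_le_add_right (card_union_le _ _) _)
  rw [card_isUnit] at h5
  have h1 := hc (u * v)
  have h2 := hc v
  omega

lemma card_dilate_eq {q : ℕ} [NeZero q] (u : (ZMod q)ˣ) (T : ZMod q → Prop) :
    #{x : ZMod q | IsUnit x ∧ T (u * x)} = #{x : ZMod q | IsUnit x ∧ T x} := by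
  refine le_antisymm (card_dilate_le u T) ?_
  have := card_dilate_le u⁻¹ (fun x => T (u * x))
  simpa only [Units.mul_inv_cancel_left] using this

/-- An approximate solution `F` of `F (n x) = f n * F x` is multiplied by an approximate sign under
each dilation of the reduced classes, and these signs form a real character. -/
lemma exists_character {q A E g J B : ℕ} [NeZero q] (h : ArithBound q A) {f : ℕ → ℤˣ}
    (hf : ∀ m n, m ≠ 0 → n ≠ 0 → f (m * n) = f m * f n) {F : ZMod q → ℤˣ}
    (hN : q * E ^ 8 ≤ q ^ 5)
    (hexc : #(excSet q f F (q * E ^ 8)) * E ≤ g * (q * E ^ 8)) (hJ : E ^ (2 * J) ≤ q)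
    (hJ' : q ≤ E ^ (2 * J + 2)) (hB : B = A ^ (5 * J + 5) * (g + 1)) (hBE : A ^ 6 * B ≤ E) :
    ∃ χ : (ZMod q)ˣ →* ℤˣ, ∀ u : (ZMod q)ˣ,
      3 * #{x : ZMod q | IsUnit x ∧ F (u * x) ≠ χ u * F x} < q.totient := by
  have hA := h.hundred_le
  have hq : 0 < q := NeZero.pos q
  have hφ : 0 < q.totient := Nat.totient_pos.mpr hq
  have hqφ := le_mul_totient hq h
  have hB0 : 0 < B := by rw [hB]; positivity
  have hE : A ^ 2 ≤ E := by
    refine le_trans ?_ hBE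
    calc A ^ 2 ≤ A ^ 6 := Nat.pow_le_pow_right (by omega) (by norm_num)
      _ ≤ A ^ 6 * B := Nat.le_mul_of_pos_right _ hB0
  have hE0 : 0 < E := by nlinarith
  have hE9 : 9 * A ≤ E := by nlinarith
  have hLq : E ^ J ≤ q := by
    refine le_trans (Nat.pow_le_pow_right hE0 (by omega)) hJ
  have hS : ∃ S, IsDilationSet q A (E ^ J) S := by
    rcases Nat.eq_zero_or_pos J with rfl | hJ0
    · exact ⟨{1}, by simpa using isDilationSet_one q A (by omega)⟩
    · exact exists_isDilationSet hq h (hE.trans (Nat.le_self_pow (by omega) E))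
        (hLq.trans (Nat.le_self_pow (by norm_num) q))
  obtain ⟨S, hS⟩ := hS
  obtain ⟨K, hK⟩ := exists_approx_all h hf hE hN hexc hJ (E ^ J) (by positivity)
    (Nat.pow_le_pow_right hE0 (by omega))
  obtain ⟨K', hK'⟩ := exists_approx_all h hf hE hN hexc hJ (E ^ (J + 4)) (by positivity) le_rfl
  rw [← hB] at hK hK'
  have hq2 : q * E ^ 2 ≤ E ^ (2 * J + 4) := by
    calc q * E ^ 2 ≤ E ^ (2 * J + 2) * E ^ 2 := Nat.mul_le_mul_right _ hJ'
      _ = _ := by ring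
  obtain ⟨c, hc⟩ := exists_sign_of_approx hA hE9 hS (by positivity) hK (by positivity) hK'
    (by rw [← pow_add]; exact hq2.trans (Nat.pow_le_pow_right hE0 (by omega)))
    (by rw [← pow_add]; exact Nat.pow_le_pow_right hE0 (by omega))
    (by rw [← pow_mul]; exact hq2.trans (Nat.pow_le_pow_right hE0 (by omega)))
  obtain ⟨l, hlS, hl⟩ := exists_good_dilation hS hK
  set D0 := ({x : ZMod q | IsUnit x ∧ F (l * x) ≠ f l * K x} : Finset (ZMod q)) with hD0
  have hD0c : A ^ 2 * #D0 * 2 ≤ q := by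
    have : E * (A ^ 2 * #D0 * 2) ≤ E * q := by
      calc E * (A ^ 2 * #D0 * 2) = 2 * A ^ 2 * (#D0 * E) := by ring
        _ ≤ 2 * A ^ 2 * (B * A * q) := Nat.mul_le_mul_left _ hl
        _ = 2 * (A ^ 3 * B * q) := by ring
        _ ≤ A ^ 3 * (A ^ 3 * B * q) := by
            refine Nat.mul_le_mul_right _ ?_
            calc 2 ≤ A := by omega
              _ ≤ A ^ 3 := Nat.le_self_pow (by norm_num) A
        _ = A ^ 6 * B * q := by ring
        _ ≤ E * q := Nat.mul_le_mul_right _ hBE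
    exact Nat.le_of_mul_le_mul_left this hE0
  obtain ⟨Bad, hBad⟩ : ∃ Bad : ZMod q → Prop, ∀ z, Bad z ↔ q < A ^ 2 *
    #{x : ZMod q | IsUnit x ∧ K (z * x) ≠ c z * K' x} := ⟨_, fun _ => Iff.rfl⟩
  have hc' : #{z : ZMod q | IsUnit z ∧ Bad z} * E ≤ (4 * A ^ 3 * B + 1) * q := by
    simp only [hBad]; exact hc
  have hTφ : 2 * #{z : ZMod q | IsUnit z ∧ Bad z} < q.totient := by
    have : E * (2 * #{z : ZMod q | IsUnit z ∧ Bad z}) < E * q.totient := by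
      calc E * (2 * #{z : ZMod q | IsUnit z ∧ Bad z})
          = 2 * (#{z : ZMod q | IsUnit z ∧ Bad z} * E) := by ring
        _ ≤ 2 * ((4 * A ^ 3 * B + 1) * (A * q.totient)) :=
            Nat.mul_le_mul_left _ (hc'.trans (Nat.mul_le_mul_left _ hqφ))
        _ = (8 * (A ^ 4 * B) + 2 * A) * q.totient := by ring
        _ < A ^ 6 * B * q.totient := by
            refine Nat.mul_lt_mul_of_pos_right ?_ hφ
            have e1 : A ≤ A ^ 4 * B := (Nat.le_self_pow (by norm_num) A).trans
              (Nat.le_mul_of_pos_right _ hB0)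
            calc 8 * (A ^ 4 * B) + 2 * A ≤ 10 * (A ^ 4 * B) := by omega
              _ < A * A * (A ^ 4 * B) := Nat.mul_lt_mul_of_pos_right (by nlinarith) (by positivity)
              _ = _ := by ring
        _ ≤ E * q.totient := Nat.mul_le_mul_right _ hBE
    exact Nat.lt_of_mul_lt_mul_left this
  apply exists_hom_of_dilation
  intro u
  -- dilations by `z` and by `u z` both carry `K` to `K'` up to sign, so dilation by `u` acts by a
  -- sign on `K`, hence also on its dilate `F`
  obtain ⟨z, hz1, hz2⟩ : ∃ z : (ZMod q)ˣ, ¬ Bad z ∧ ¬ Bad (u * z) := by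
    by_contra! hcon
    have : ({x : ZMod q | IsUnit x} : Finset (ZMod q)) ⊆
        ({x : ZMod q | IsUnit x ∧ Bad x} : Finset (ZMod q)) ∪
        ({x : ZMod q | IsUnit x ∧ Bad (u * x)} : Finset (ZMod q)) := by
      intro x hx
      have hx := (mem_filter.mp hx).2
      simp only [mem_union, mem_filter, mem_univ, true_and, hx]
      by_contra hh
      rw [not_or] at hh
      exact hh.2 (by simpa using hcon hx.unit (by simpa using hh.1))
    have h4 := (card_le_card this).trans (card_union_le _ _)
    rw [card_isUnit, card_dilate_eq u Bad] at h4
    omega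
  have hlu : IsUnit (l : ZMod q) := (ZMod.isUnit_iff_coprime _ q).mpr (hS.coprime _ hlS)
  refine ⟨c (u * z) * c z, ?_⟩
  rw [hBad, not_lt] at hz1 hz2
  set w : (ZMod q)ˣ := hlu.unit * z with hw
  have hsub : ({x : ZMod q | IsUnit x ∧ F (u * (w * x)) ≠ c (u * z) * c z * F (w * x)} :
      Finset (ZMod q)) ⊆
      (({x : ZMod q | IsUnit x ∧ K (z * x) ≠ c z * K' x} : Finset (ZMod q)) ∪
        ({x : ZMod q | IsUnit x ∧ K (u * z * x) ≠ c (u * z) * K' x} : Finset (ZMod q))) ∪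
      (({x : ZMod q | IsUnit x ∧ F (l * (z * x)) ≠ f l * K (z * x)} : Finset (ZMod q)) ∪
        ({x : ZMod q | IsUnit x ∧ F (l * ((u * z : (ZMod q)ˣ) * x)) ≠
          f l * K ((u * z : (ZMod q)ˣ) * x)} : Finset (ZMod q))) := by
    intro x hx
    obtain ⟨hx, hne⟩ := (mem_filter.mp hx).2
    by_contra hcon
    simp only [mem_union, not_or, mem_filter, mem_univ, true_and, hx, not_not] at hcon
    obtain ⟨⟨e1, e2⟩, e3, e4⟩ := hcon
    apply hne
    have hw1 : (w : ZMod q) * x = l * (z * x) := by simp [hw, mul_assoc]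
    have hw2 : (u : ZMod q) * (w * x) = l * ((u * z : (ZMod q)ˣ) * x) := by
      rw [hw1, Units.val_mul]; ring
    rw [hw2, e4, hw1, e3, Units.val_mul, e2, e1]
    have hsq : c z * c z = 1 := Int.units_mul_self _
    calc f l * (c (u * z) * K' x) = f l * (c (u * z) * (c z * c z) * K' x) := by
          rw [hsq, mul_one]
      _ = _ := by ac_rfl
  have hcard := (card_le_card hsub).trans ((card_union_le _ _).trans
    (Nat.add_le_add (card_union_le _ _) (card_union_le _ _)))
  have t1 : #{x : ZMod q | IsUnit x ∧ F (l * (z * x)) ≠ f l * K (z * x)} = #D0 := by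
    convert card_dilate_eq z (fun x => F (l * x) ≠ f l * K x)
  have t2 : #{x : ZMod q | IsUnit x ∧ F (l * ((u * z : (ZMod q)ˣ) * x)) ≠
          f l * K ((u * z : (ZMod q)ˣ) * x)} = #D0 := by
    convert card_dilate_eq (u * z) (fun x => F (l * x) ≠ f l * K x)
  have t3 : #{x : ZMod q | IsUnit x ∧ F (u * (w * x)) ≠ c (u * z) * c z * F (w * x)} =
      #{x : ZMod q | IsUnit x ∧ F (u * x) ≠ c (u * z) * c z * F x} := by
    convert card_dilate_eq w (fun x => F (u * x) ≠ c (u * z) * c z * F x)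
  rw [t1, t2, t3] at hcard
  generalize #{x : ZMod q | IsUnit x ∧ F (u * x) ≠ c (u * z) * c z * F x} = m at hcard ⊢
  generalize #{x : ZMod q | IsUnit x ∧ K (z * x) ≠ c z * K' x} = m1 at hcard hz1
  generalize #{x : ZMod q | IsUnit x ∧ K (u * z * x) ≠ c (u * z) * K' x} = m2 at hcard hz2
  have e1 : A ^ 2 * m ≤ 3 * q := by
    have := Nat.mul_le_mul_left (A ^ 2) hcard
    rw [mul_add, mul_add, mul_add] at this
    omega
  have e2 : A ^ 2 * (3 * m) < A ^ 2 * q.totient := by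
    calc A ^ 2 * (3 * m) = 3 * (A ^ 2 * m) := by ring
      _ ≤ 9 * q := by omega
      _ ≤ 9 * (A * q.totient) := Nat.mul_le_mul_left _ hqφ
      _ = 9 * A * q.totient := by ring
      _ < A ^ 2 * q.totient := Nat.mul_lt_mul_of_pos_right (by nlinarith) hφ
  exact Nat.lt_of_mul_lt_mul_left e2

/-! ### Comparison with the character -/

/-- The number of failures of `F (n x) = f n * K x` over the reduced classes `x`, for fixed `n`. -/
def rowDefect (q : ℕ) [NeZero q] (f : ℕ → ℤˣ) (F K : ZMod q → ℤˣ) (n : ℕ) : ℕ :=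
  #{x : ZMod q | IsUnit x ∧ F (n * x) ≠ f n * K x}

/-- The `n ≤ P` coprime to `q` for which at least a tenth of the row is defective. -/
def badRows (q : ℕ) [NeZero q] (f : ℕ → ℤˣ) (F K : ZMod q → ℤˣ) (P : ℕ) : Finset ℕ :=
  {n ∈ Icc 1 P | n.Coprime q ∧ q.totient < 10 * rowDefect q f F K n}

lemma card_badRows_le {q A E B P : ℕ} [NeZero q] (h : ArithBound q A) {f : ℕ → ℤˣ}
    {F K : ZMod q → ℤˣ} (hK : #(defect q f F K P) * E ≤ B * P * q) :
    #(badRows q f F K P) * E ≤ 10 * A * B * P := by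
  have hq : 0 < q := NeZero.pos q
  have hφ : 0 < q.totient := Nat.totient_pos.mpr hq
  have hqφ := le_mul_totient hq h
  have h1 : #(badRows q f F K P) * q.totient ≤ 10 * #(defect q f F K P) := by
    have e : ∑ n ∈ badRows q f F K P, rowDefect q f F K n ≤ #(defect q f F K P) := by
      have : #((badRows q f F K P).sigma fun n =>
          ({x : ZMod q | IsUnit x ∧ F (n * x) ≠ f n * K x} : Finset (ZMod q))) ≤
          #(defect q f F K P) := by
        refine card_le_card_of_injOn (fun t => (t.1, t.2)) ?_ ?_
        · rintro ⟨n, x⟩ ht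
          simp only [coe_sigma, Set.mem_sigma_iff, mem_coe, mem_filter, mem_univ, true_and,
            badRows] at ht
          exact mem_coe.mpr (mem_filter.mpr ⟨mem_product.mpr ⟨ht.1.1, mem_univ _⟩,
            ht.1.2.1, ht.2.1, ht.2.2⟩)
        · rintro ⟨n, x⟩ _ ⟨n', x'⟩ _ e
          simp only [Prod.mk.injEq] at e
          obtain ⟨rfl, rfl⟩ := e
          rfl
      rwa [card_sigma] at this
    calc #(badRows q f F K P) * q.totient
        ≤ ∑ n ∈ badRows q f F K P, 10 * rowDefect q f F K n := by
          rw [← smul_eq_mul]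
          exact card_nsmul_le_sum _ _ _ fun n hn => (mem_filter.mp hn).2.2.le
      _ = 10 * ∑ n ∈ badRows q f F K P, rowDefect q f F K n := by rw [mul_sum]
      _ ≤ _ := Nat.mul_le_mul_left _ e
  have h2 : q.totient * (#(badRows q f F K P) * E) ≤ q.totient * (10 * A * B * P) := by
    calc q.totient * (#(badRows q f F K P) * E) = #(badRows q f F K P) * q.totient * E := by ring
      _ ≤ 10 * #(defect q f F K P) * E := Nat.mul_le_mul_right _ h1
      _ = 10 * (#(defect q f F K P) * E) := by ring
      _ ≤ 10 * (B * P * (A * q.totient)) :=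
          Nat.mul_le_mul_left _ (hK.trans (Nat.mul_le_mul_left _ hqφ))
      _ = _ := by ring
  exact Nat.le_of_mul_le_mul_left h2 hφ

/-- Two good rows determine the same sign `f n * ψ n`, both being read off from one class `x`
at which nothing fails. -/
lemma eq_of_good_rows {q : ℕ} [NeZero q] {f : ℕ → ℤˣ} {F K ψ : ZMod q → ℤˣ}
    (hψ : ∀ u : ZMod q, IsUnit u →
      3 * #{x : ZMod q | IsUnit x ∧ F (u * x) ≠ ψ u * F x} < q.totient) {n n' : ℕ}
    (hn : n.Coprime q) (hn' : n'.Coprime q) (hg : 10 * rowDefect q f F K n ≤ q.totient)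
    (hg' : 10 * rowDefect q f F K n' ≤ q.totient) : f n * ψ n = f n' * ψ n' := by
  have hu := (ZMod.isUnit_iff_coprime n q).mpr hn
  have hu' := (ZMod.isUnit_iff_coprime n' q).mpr hn'
  have h1 := hψ n hu
  have h2 := hψ n' hu'
  unfold rowDefect at hg hg'
  by_contra hne
  have : ({x : ZMod q | IsUnit x} : Finset (ZMod q)) ⊆
      (({x : ZMod q | IsUnit x ∧ F (n * x) ≠ ψ n * F x} : Finset (ZMod q)) ∪
        ({x : ZMod q | IsUnit x ∧ F (n' * x) ≠ ψ n' * F x} : Finset (ZMod q))) ∪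
      (({x : ZMod q | IsUnit x ∧ F (n * x) ≠ f n * K x} : Finset (ZMod q)) ∪
        ({x : ZMod q | IsUnit x ∧ F (n' * x) ≠ f n' * K x} : Finset (ZMod q))) := by
    intro x hx
    have hx := (mem_filter.mp hx).2
    by_contra hcon
    simp only [mem_union, not_or, mem_filter, mem_univ, true_and, hx, not_not] at hcon
    obtain ⟨⟨e1, e2⟩, e3, e4⟩ := hcon
    apply hne
    rw [e3] at e1
    rw [e4] at e2
    revert e1 e2
    generalize f n = a, f n' = a', ψ n = b, ψ n' = b', K x = k, F x = y
    rcases Int.units_eq_one_or a with rfl | rfl <;> rcases Int.units_eq_one_or a' with rfl | rfl <;>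
    rcases Int.units_eq_one_or b with rfl | rfl <;> rcases Int.units_eq_one_or b' with rfl | rfl <;>
    rcases Int.units_eq_one_or k with rfl | rfl <;> rcases Int.units_eq_one_or y with rfl | rfl <;>
    decide
  have hcard := (card_le_card this).trans ((card_union_le _ _).trans
    (Nat.add_le_add (card_union_le _ _) (card_union_le _ _)))
  rw [card_isUnit] at hcard
  omega

/-- On good rows `f` is the character: compare with a common good row of the scale `P / 2`, down to
scales so small that the row of `1` must be good. -/
lemma eq_char_of_good_row {q A E B M : ℕ} [NeZero q] (h : ArithBound q A) {f : ℕ → ℤˣ}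
    {F ψ : ZMod q → ℤˣ} {K : ℕ → ZMod q → ℤˣ} (hf1 : f 1 = 1) (hψ1 : ψ 1 = 1)
    (hψ : ∀ u : ZMod q, IsUnit u →
      3 * #{x : ZMod q | IsUnit x ∧ F (u * x) ≠ ψ u * F x} < q.totient)
    (hM : M ≤ q ^ 5) (hB : 0 < B) (hBE : A ^ 6 * B ≤ E)
    (hK : ∀ P, 0 < P → P ≤ M → #(defect q f F (K P) P) * E ≤ B * P * q) (P : ℕ) (hP : 0 < P)
    (hPM : P ≤ M) (n : ℕ) (hn : n ∈ Icc 1 P) (hnq : n.Coprime q) (hbad : n ∉ badRows q f F (K P) P) :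
    f n = ψ n := by
  have hA := h.hundred_le
  have hq : 0 < q := NeZero.pos q
  have good : ∀ P n, n ∈ Icc 1 P → n.Coprime q → n ∉ badRows q f F (K P) P →
      10 * rowDefect q f F (K P) n ≤ q.totient := by
    intro P n hn hnq hb
    by_contra hcon
    exact hb (mem_filter.mpr ⟨hn, hnq, by omega⟩)
  have conv : ∀ n m : ℕ, f n * ψ n = f m * ψ m → f m = ψ m → f n = ψ n := by
    intro n m e1 e2
    rw [e2, Int.units_mul_self] at e1
    have := int_units_eq_iff.mp e1.symm
    simpa using this
  induction P using Nat.strong_induction_on generalizing n with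
  | _ P ih =>
    have hbP := card_badRows_le h (hK P hP hPM)
    rcases Nat.lt_or_ge (10 * A * B * P) E with hsmall | hlarge
      -- no row is bad at this scale, in particular not the row of `1`
    · have h0 : #(badRows q f F (K P) P) = 0 := by
        by_contra h0
        have := Nat.le_mul_of_pos_left E (Nat.pos_of_ne_zero h0)
        omega
      have h1 : (1 : ℕ) ∈ Icc 1 P := mem_Icc.mpr ⟨le_rfl, hP⟩
      refine conv n 1 (eq_of_good_rows hψ hnq (Nat.coprime_one_left q) (good P n hn hnq hbad)
        (good P 1 h1 (Nat.coprime_one_left q) ?_)) (by simp [hf1, hψ1])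
      rw [card_eq_zero.mp h0]; simp
    · have hPbig : A ^ 5 ≤ 10 * P := by
        have : (A * B) * A ^ 5 ≤ (A * B) * (10 * P) := by
          calc (A * B) * A ^ 5 = A ^ 6 * B := by ring
            _ ≤ 10 * A * B * P := hBE.trans hlarge
            _ = _ := by ring
        exact Nat.le_of_mul_le_mul_left this (by positivity)
      have hA5 : 100 * A ^ 2 ≤ A ^ 5 := by
        calc 100 * A ^ 2 ≤ A * A * A * A ^ 2 := Nat.mul_le_mul_right _ (by nlinarith)
          _ = A ^ 5 := by ring
      have hAA : A ≤ A ^ 2 := Nat.le_self_pow (by norm_num) A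
      set P' := P / 2 with hP'
      have hP2 : P ≤ 2 * P' + 1 := by omega
      have hP'A : A ^ 2 ≤ P' := by omega
      have hP'0 : 0 < P' := by omega
      have hbP' := card_badRows_le h (hK P' hP'0 (by omega))
      set U := ({m ∈ Icc 1 P' | m.Coprime q} : Finset ℕ) with hU
      have hUc : 10 * P' ≤ A * #U + A ^ 2 := by
        have hpi := h.primes P' (by omega) (by omega)
        have hω : #q.primeFactors ≤ A := (card_primeFactors_le_card_divisors q).trans
          (h.divisors q hq (Nat.le_self_pow (by norm_num) q))
        have : Nat.primeCounting P' ≤ #U + A := by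
          rw [← card_primes_Icc]
          refine (card_le_card (t := U ∪ q.primeFactors) fun p hp => ?_).trans
            ((card_union_le _ _).trans (Nat.add_le_add_left hω _))
          obtain ⟨hp1, hp⟩ := mem_filter.mp hp
          by_cases hpq : p ∣ q
          · exact mem_union_right _ (Nat.mem_primeFactors.mpr ⟨hp, hpq, hq.ne'⟩)
          · exact mem_union_left _ (mem_filter.mpr ⟨hp1, hp.coprime_iff_not_dvd.mpr hpq⟩)
        have := Nat.mul_le_mul_left A this
        rw [mul_add, ← pow_two] at this
        omega
      -- the bad rows of both scales together are fewer than the primes up to `P / 2`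
      have hsum : A * (#(badRows q f F (K P) P) + #(badRows q f F (K P') P')) < P' := by
        have e : E * (A * (#(badRows q f F (K P) P) + #(badRows q f F (K P') P'))) < E * P' := by
          calc E * (A * (#(badRows q f F (K P) P) + #(badRows q f F (K P') P')))
              = A * (#(badRows q f F (K P) P) * E + #(badRows q f F (K P') P') * E) := by ring
            _ ≤ A * (10 * A * B * P + 10 * A * B * P') :=
                Nat.mul_le_mul_left _ (Nat.add_le_add hbP hbP')
            _ = 10 * (A ^ 2 * B) * (P + P') := by ring
            _ ≤ 10 * (A ^ 2 * B) * (4 * P') := Nat.mul_le_mul_left _ (by omega)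
            _ = 40 * (A ^ 2 * B * P') := by ring
            _ < A * A ^ 3 * (A ^ 2 * B * P') := by
                refine Nat.mul_lt_mul_of_pos_right ?_ (by positivity)
                calc 40 < A := by omega
                  _ ≤ A * A ^ 3 := Nat.le_mul_of_pos_right _ (by positivity)
            _ = A ^ 6 * B * P' := by ring
            _ ≤ E * P' := Nat.mul_le_mul_right _ hBE
        exact Nat.lt_of_mul_lt_mul_left e
      obtain ⟨m, hmU, hm⟩ : ∃ m ∈ U, m ∉ badRows q f F (K P) P ∪ badRows q f F (K P') P' := by
        by_contra! hcon
        have h1 := (card_le_card (show U ⊆ _ from hcon)).trans (card_union_le _ _)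
        have := Nat.mul_le_mul_left A h1
        omega
      obtain ⟨hm1, hmq⟩ := mem_filter.mp hmU
      rw [mem_union, not_or] at hm
      have hmP : m ∈ Icc 1 P := by rw [mem_Icc] at hm1 ⊢; omega
      exact conv n m (eq_of_good_rows hψ hnq hmq (good P n hn hnq hbad)
        (good P m hmP hmq hm.1)) (ih P' (by omega) hP'0 (by omega) m hm1 hmq hm.2)

/-- The integers `p ≤ q` in the range of the approximate equations at which `f` differs from the
character are sparse, in the logarithmic sense. -/
lemma exists_char_sum_le {q A E g J B : ℕ} [NeZero q] (h : ArithBound q A) {f : ℕ → ℤˣ}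
    (hf : ∀ m n, m ≠ 0 → n ≠ 0 → f (m * n) = f m * f n) {F : ZMod q → ℤˣ}
    (hN : q * E ^ 8 ≤ q ^ 5)
    (hexc : #(excSet q f F (q * E ^ 8)) * E ≤ g * (q * E ^ 8)) (hJ : E ^ (2 * J) ≤ q)
    (hJ' : q ≤ E ^ (2 * J + 2)) (hB : B = A ^ (5 * J + 5) * (g + 1)) (hBE : A ^ 6 * B ≤ E) :
    ∃ χ : (ZMod q)ˣ →* ℤˣ, ∀ T : Finset ℕ,
      (∀ p ∈ T, 0 < p ∧ p ≤ q ∧ 2 * p ≤ E ^ (J + 4) ∧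
        ∃ u : (ZMod q)ˣ, (u : ZMod q) = p ∧ f p ≠ χ u) →
      ∑ p ∈ T, (1 : ℝ) / p ≤ 20 * A ^ 2 * B / E := by
  have hA := h.hundred_le
  have hq : 0 < q := NeZero.pos q
  have hB0 : 0 < B := by rw [hB]; positivity
  have hE : A ^ 2 ≤ E := by
    refine le_trans ?_ hBE
    calc A ^ 2 ≤ A ^ 6 := Nat.pow_le_pow_right (by omega) (by norm_num)
      _ ≤ A ^ 6 * B := Nat.le_mul_of_pos_right _ hB0
  have hE0 : 0 < E := by nlinarith
  obtain ⟨χ, hχ⟩ := exists_character h hf hN hexc hJ hJ' hB hBE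
  refine ⟨χ, fun T hT => ?_⟩
  have hKex : ∀ P, ∃ K, 0 < P → P ≤ E ^ (J + 4) → #(defect q f F K P) * E ≤ B * P * q := by
    intro P
    by_cases hP : 0 < P ∧ P ≤ E ^ (J + 4)
    · obtain ⟨K, hK⟩ := exists_approx_all h hf hE hN hexc hJ P hP.1 hP.2
      exact ⟨K, fun _ _ => hB ▸ hK⟩
    · exact ⟨F, fun h1 h2 => absurd ⟨h1, h2⟩ hP⟩
  choose K hK using hKex
  set ψ : ZMod q → ℤˣ := fun x => if hx : IsUnit x then χ hx.unit else 1 with hψdef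
  have hψu : ∀ u : (ZMod q)ˣ, ψ u = χ u := by
    intro u
    simp only [hψdef, u.isUnit, dif_pos]
    congr 1
    ext; rfl
  have hψ : ∀ u : ZMod q, IsUnit u →
      3 * #{x : ZMod q | IsUnit x ∧ F (u * x) ≠ ψ u * F x} < q.totient := by
    rintro _ ⟨u, rfl⟩
    rw [hψu]; exact hχ u
  have hψ1 : ψ 1 = 1 := by simpa using hψu 1
  have hf1 : f 1 = 1 := by simpa using hf 1 1 (by norm_num) (by norm_num)
  have hM : E ^ (J + 4) ≤ q ^ 5 := by
    calc E ^ (J + 4) = E ^ J * E ^ 4 := pow_add _ _ _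
      _ ≤ q * E ^ 8 := Nat.mul_le_mul ((Nat.pow_le_pow_right hE0 (by omega)).trans hJ)
          (Nat.pow_le_pow_right hE0 (by norm_num))
      _ ≤ q ^ 5 := hN
  have key := eq_char_of_good_row h hf1 hψ1 hψ hM hB0 hBE hK
  -- the number of dyadic blocks, bounded by the number of divisors of a power of `2`
  have hlog : Nat.log 2 q + 1 ≤ A := by
    have h1 := h.divisors (2 ^ Nat.log 2 q) Nat.one_le_two_pow
      ((Nat.pow_log_le_self 2 hq.ne').trans (Nat.le_self_pow (by norm_num) q))
    rwa [Nat.divisors_prime_pow Nat.prime_two, card_map, card_range] at h1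
  have hER : (0 : ℝ) < E := by exact_mod_cast hE0
  -- in a dyadic block every `p ∈ T` is a bad row at the scale `2 ^ (i + 1)`
  have fib : ∀ i ∈ range (Nat.log 2 q + 1), ∑ p ∈ T with Nat.log 2 p = i, (1 : ℝ) / p ≤
      20 * A * B / E := by
    intro i _
    rcases ({p ∈ T | Nat.log 2 p = i} : Finset ℕ).eq_empty_or_nonempty with he | ⟨p₀, hp₀⟩
    · rw [he, sum_empty]; positivity
    obtain ⟨hp₀T, hp₀i⟩ := mem_filter.mp hp₀
    have hPM : 2 ^ (i + 1) ≤ E ^ (J + 4) := by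
      have h1 := Nat.pow_log_le_self 2 (hT p₀ hp₀T).1.ne'
      have h2 := (hT p₀ hp₀T).2.2.1
      rw [hp₀i] at h1
      rw [pow_succ]; omega
    have hsub : ({p ∈ T | Nat.log 2 p = i} : Finset ℕ) ⊆ badRows q f F (K (2 ^ (i + 1))) (2 ^ (i + 1)) := by
      intro p hp
      obtain ⟨hpT, hpi⟩ := mem_filter.mp hp
      obtain ⟨hp0, -, -, u, hu, hne⟩ := hT p hpT
      by_contra hcon
      apply hne
      rw [key (2 ^ (i + 1)) (by positivity) hPM p (mem_Icc.mpr ⟨hp0, ?_⟩) ?_ hcon, ← hu, hψu]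
      · rw [← hpi]; exact (Nat.lt_pow_succ_log_self (by norm_num) p).le
      · rw [← ZMod.isUnit_iff_coprime, ← hu]; exact u.isUnit
    have hc := (Nat.mul_le_mul_right E (card_le_card hsub)).trans
      (card_badRows_le h (hK (2 ^ (i + 1)) (by positivity) hPM))
    have hcR : (#{p ∈ T | Nat.log 2 p = i} : ℝ) * E ≤ 10 * A * B * 2 ^ (i + 1) := by exact_mod_cast hc
    have h2i : (0 : ℝ) < 2 ^ i := by positivity
    calc ∑ p ∈ T with Nat.log 2 p = i, (1 : ℝ) / p
        ≤ #{p ∈ T | Nat.log 2 p = i} • ((1 : ℝ) / 2 ^ i) := by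
          refine sum_le_card_nsmul _ _ _ fun p hp => ?_
          obtain ⟨hpT, hpi⟩ := mem_filter.mp hp
          refine one_div_le_one_div_of_le h2i ?_
          have := Nat.pow_log_le_self 2 (hT p hpT).1.ne'
          rw [hpi] at this
          exact_mod_cast this
      _ ≤ 20 * A * B / E := by
          rw [nsmul_eq_mul, mul_one_div, div_le_div_iff₀ h2i hER]
          rw [pow_succ] at hcR
          linarith
  rw [← sum_fiberwise_of_maps_to (g := Nat.log 2) (t := range (Nat.log 2 q + 1)) fun p hp =>
    mem_range.mpr (Nat.lt_succ_of_le (Nat.log_mono_right (hT p hp).2.1))]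
  refine (sum_le_card_nsmul _ _ _ fib).trans ?_
  rw [card_range, nsmul_eq_mul]
  have hlogR : ((Nat.log 2 q + 1 : ℕ) : ℝ) ≤ A := by exact_mod_cast hlog
  calc ((Nat.log 2 q + 1 : ℕ) : ℝ) * (20 * A * B / E) ≤ A * (20 * A * B / E) := by gcongr
    _ = _ := by ring

/-! ### Squarefree integers in residue classes -/

lemma card_modEq_dvd (q m X : ℕ) (hq : 0 < q) (hm : 0 < m) (hmq : m.Coprime q) (b : ZMod q) :
    |(#{n ∈ Icc 1 X | ((n : ℕ) : ZMod q) = b ∧ m ∣ n} : ℝ) - (X : ℝ) / (q * m)| ≤ 1 := by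
  have : NeZero q := ⟨hq.ne'⟩
  obtain ⟨v, hv1, hv2⟩ := Nat.chineseRemainder hmq 0 b.val
  have hset : ({n ∈ Icc 1 X | ((n : ℕ) : ZMod q) = b ∧ m ∣ n} : Finset ℕ) =
      {n ∈ Ioc 0 X | n ≡ v [MOD m * q]} := by
    ext n
    simp only [mem_filter, mem_Icc, mem_Ioc]
    refine and_congr (by omega) ?_
    rw [← Nat.modEq_and_modEq_iff_modEq_mul hmq, and_comm]
    refine and_congr ?_ ?_
    · rw [← Nat.modEq_zero_iff_dvd]
      exact ⟨fun h => h.trans hv1.symm, fun h => h.trans hv1⟩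
    · constructor
      · intro h
        refine Nat.ModEq.trans ?_ hv2.symm
        rw [← ZMod.natCast_eq_natCast_iff, h, ZMod.natCast_zmod_val]
      · intro h
        have := h.trans hv2
        rwa [← ZMod.natCast_eq_natCast_iff, ZMod.natCast_zmod_val] at this
  have hmq0 : 0 < m * q := by positivity
  have hc := Nat.Ioc_filter_modEq_card 0 X hmq0 v
  rw [hset]
  set M := m * q with hM
  have hMQ : (0 : ℚ) < M := by exact_mod_cast hmq0
  have hle : ⌊((0 : ℕ) - v : ℚ) / M⌋ ≤ ⌊((X : ℕ) - v : ℚ) / M⌋ := by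
    apply Int.floor_le_floor
    gcongr
    exact_mod_cast Nat.zero_le X
  rw [max_eq_left (by linarith)] at hc
  have h1 := Int.floor_le (((0 : ℕ) - v : ℚ) / M)
  have h2 := Int.lt_floor_add_one (((0 : ℕ) - v : ℚ) / M)
  have h3 := Int.floor_le (((X : ℕ) - v : ℚ) / M)
  have h4 := Int.lt_floor_add_one (((X : ℕ) - v : ℚ) / M)
  have hcQ : (#{n ∈ Ioc 0 X | n ≡ v [MOD M]} : ℚ) = ⌊((X : ℕ) - v : ℚ) / M⌋ - ⌊((0 : ℕ) - v : ℚ) / M⌋ := by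
    exact_mod_cast hc
  have hd : ((X : ℕ) - v : ℚ) / M - ((0 : ℕ) - v : ℚ) / M = (X : ℚ) / M := by push_cast; ring
  have : |(#{n ∈ Ioc 0 X | n ≡ v [MOD M]} : ℚ) - (X : ℚ) / M| ≤ 1 := by
    rw [abs_le, hcQ, ← hd]
    constructor <;> linarith
  have hR : |(#{n ∈ Ioc 0 X | n ≡ v [MOD M]} : ℝ) - (X : ℝ) / M| ≤ 1 := by
    have := (Rat.cast_le (K := ℝ)).mpr this
    push_cast at this
    exact this
  rw [hM] at hR ⊢
  push_cast at hR
  rwa [mul_comm (m : ℝ)] at hR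

/-- Legendre's sieve for multiples of `m` in a residue class. -/
lemma card_sifted (q X : ℕ) (hq : 0 < q) (b : ZMod q) (S : Finset ℕ) (hS : ∀ p ∈ S, p.Prime)
    (hSq : ∀ p ∈ S, p.Coprime q) : ∀ m : ℕ, 0 < m → m.Coprime q → (∀ p ∈ S, p.Coprime m) →
    |(#{n ∈ Icc 1 X | ((n : ℕ) : ZMod q) = b ∧ m ∣ n ∧ ∀ p ∈ S, ¬ p ∣ n} : ℝ) -
      (X : ℝ) / (q * m) * ∏ p ∈ S, (1 - 1 / (p : ℝ))| ≤ 2 ^ #S := by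
  induction S using Finset.induction_on with
  | empty =>
    intro m hm hmq _
    simpa using card_modEq_dvd q m X hq hm hmq b
  | insert p S hp ih =>
    intro m hm hmq hSm
    have ih' := ih (fun r hr => hS r (mem_insert_of_mem hr))
      (fun r hr => hSq r (mem_insert_of_mem hr))
    have hpp := hS p (mem_insert_self p S)
    have hpm := hSm p (mem_insert_self p S)
    have i1 := ih' m hm hmq (fun r hr => hSm r (mem_insert_of_mem hr))
    have i2 := ih' (p * m) (Nat.mul_pos hpp.pos hm)
      (Nat.Coprime.mul_left (hSq p (mem_insert_self p S)) hmq) (fun r hr =>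
        Nat.Coprime.mul_right ((Nat.coprime_primes (hS r (mem_insert_of_mem hr)) hpp).mpr
          (by rintro rfl; exact hp hr)) (hSm r (mem_insert_of_mem hr)))
    have hdv : ∀ n, p * m ∣ n ↔ p ∣ n ∧ m ∣ n := fun n =>
      ⟨fun hh => ⟨(dvd_mul_right p m).trans hh, (dvd_mul_left m p).trans hh⟩,
        fun hh => hpm.mul_dvd_of_dvd_of_dvd hh.1 hh.2⟩
    have hsplit : #{n ∈ Icc 1 X | ((n : ℕ) : ZMod q) = b ∧ m ∣ n ∧ ∀ r ∈ S, ¬ r ∣ n} =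
        #{n ∈ Icc 1 X | ((n : ℕ) : ZMod q) = b ∧ m ∣ n ∧ ∀ r ∈ insert p S, ¬ r ∣ n} +
        #{n ∈ Icc 1 X | ((n : ℕ) : ZMod q) = b ∧ p * m ∣ n ∧ ∀ r ∈ S, ¬ r ∣ n} := by
      rw [← card_union_of_disjoint]
      · congr 1
        ext n
        simp only [mem_union, mem_filter, forall_mem_insert, hdv]
        tauto
      · rw [disjoint_left]
        intro n h1 h2
        simp only [mem_filter, forall_mem_insert, hdv] at h1 h2
        tauto
    have hsR : (#{n ∈ Icc 1 X | ((n : ℕ) : ZMod q) = b ∧ m ∣ n ∧ ∀ r ∈ S, ¬ r ∣ n} : ℝ) =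
        #{n ∈ Icc 1 X | ((n : ℕ) : ZMod q) = b ∧ m ∣ n ∧ ∀ r ∈ insert p S, ¬ r ∣ n} +
        #{n ∈ Icc 1 X | ((n : ℕ) : ZMod q) = b ∧ p * m ∣ n ∧ ∀ r ∈ S, ¬ r ∣ n} := by
      exact_mod_cast hsplit
    rw [prod_insert hp, card_insert_of_notMem hp, pow_succ]
    have hp0 : (p : ℝ) ≠ 0 := by exact_mod_cast hpp.ne_zero
    have hm0 : (m : ℝ) ≠ 0 := by exact_mod_cast hm.ne'
    have hq0 : (q : ℝ) ≠ 0 := by exact_mod_cast hq.ne'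
    have e : (X : ℝ) / (q * m) * ((1 - 1 / (p : ℝ)) * ∏ r ∈ S, (1 - 1 / (r : ℝ))) =
        (X : ℝ) / (q * m) * ∏ r ∈ S, (1 - 1 / (r : ℝ)) -
        (X : ℝ) / (q * (p * m : ℕ)) * ∏ r ∈ S, (1 - 1 / (r : ℝ)) := by
      push_cast; field_simp
    rw [e]
    rw [abs_le] at i1 i2 ⊢
    constructor <;> linarith [i1.1, i1.2, i2.1, i2.2]

lemma two_pow_card_primeFactors_le {n : ℕ} (hn : n ≠ 0) : 2 ^ #n.primeFactors ≤ #n.divisors := by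
  rw [Nat.card_divisors hn, ← prod_const]
  refine prod_le_prod' fun p hp => ?_
  have := (Nat.mem_primeFactors.mp hp)
  have := (this.1.factorization_pos_of_dvd hn this.2.1)
  omega

/-- The `n ≤ N` in the class `b` divisible by the square of an integer exceeding `D`. -/
def largeSq (q N D : ℕ) (b : ZMod q) : Finset ℕ :=
  {n ∈ Icc 1 N | (n : ZMod q) = b ∧ ∃ d, D < d ∧ d ^ 2 ∣ n}

/-- The classes containing unusually many integers up to `q * E ^ 4` with a large square
divisor. -/
def rareClasses (q A E : ℕ) [NeZero q] : Finset (ZMod q) :=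
  {b | E ^ 4 ≤ 16 * A * #(largeSq q (q * E ^ 4) (E ^ 3) b)}

lemma card_dvd_sq_le (N D : ℕ) (hD : 0 < D) :
    (#{n ∈ Icc 1 N | ∃ d, D < d ∧ d ^ 2 ∣ n} : ℝ) ≤ N / D := by
  have hsub : ({n ∈ Icc 1 N | ∃ d, D < d ∧ d ^ 2 ∣ n} : Finset ℕ) ⊆
      (Ioc D N).biUnion fun d => {n ∈ Ioc 0 N | d ^ 2 ∣ n} := by
    intro n hn
    obtain ⟨h1, d, hd, hdn⟩ := mem_filter.mp hn
    rw [mem_Icc] at h1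
    refine mem_biUnion.mpr ⟨d, mem_Ioc.mpr ⟨hd, ?_⟩, mem_filter.mpr ⟨mem_Ioc.mpr h1, hdn⟩⟩
    exact ((Nat.le_self_pow (by norm_num) d).trans (Nat.le_of_dvd h1.1 hdn)).trans h1.2
  rcases Nat.lt_or_ge N D with hND | hND
  · rw [Ioc_eq_empty (by omega), biUnion_empty, subset_empty] at hsub
    rw [hsub]; simp; positivity
  have h1 : (#{n ∈ Icc 1 N | ∃ d, D < d ∧ d ^ 2 ∣ n} : ℝ) ≤ ∑ d ∈ Ioc D N, ((N / d ^ 2 : ℕ) : ℝ) := by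
    have := (card_le_card hsub).trans card_biUnion_le
    simp only [Nat.Ioc_filter_dvd_card_eq_div] at this
    exact_mod_cast this
  refine h1.trans ?_
  calc ∑ d ∈ Ioc D N, ((N / d ^ 2 : ℕ) : ℝ) ≤ ∑ d ∈ Ioc D N, (N : ℝ) * ((d : ℝ) ^ 2)⁻¹ := by
        refine sum_le_sum fun d _ => ?_
        have := @Nat.cast_div_le ℝ _ _ _ N (d ^ 2)
        push_cast at this
        rwa [← div_eq_mul_inv]
    _ = N * ∑ d ∈ Ioc D N, ((d : ℝ) ^ 2)⁻¹ := by rw [mul_sum]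
    _ ≤ N * ((D : ℝ)⁻¹ - (N : ℝ)⁻¹) := by
        gcongr
        exact sum_Ioc_inv_sq_le_sub hD.ne' hND
    _ ≤ N * (D : ℝ)⁻¹ := by
        gcongr
        have : (0 : ℝ) ≤ (N : ℝ)⁻¹ := by positivity
        linarith
    _ = _ := by rw [div_eq_mul_inv]

lemma card_rareClasses_le (q A E : ℕ) [NeZero q] (hE : 0 < E) :
    #(rareClasses q A E) * E ^ 3 ≤ 16 * A * q := by
  have h1 : #(rareClasses q A E) * E ^ 4 ≤
      16 * A * #{n ∈ Icc 1 (q * E ^ 4) | ∃ d, E ^ 3 < d ∧ d ^ 2 ∣ n} := by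
    calc #(rareClasses q A E) * E ^ 4
        ≤ ∑ b ∈ rareClasses q A E, 16 * A * #(largeSq q (q * E ^ 4) (E ^ 3) b) := by
          rw [← smul_eq_mul]
          exact card_nsmul_le_sum _ _ _ fun b hb => (mem_filter.mp hb).2
      _ = 16 * A * ∑ b ∈ rareClasses q A E, #(largeSq q (q * E ^ 4) (E ^ 3) b) := by rw [mul_sum]
      _ ≤ 16 * A * ∑ b : ZMod q, #(largeSq q (q * E ^ 4) (E ^ 3) b) :=
          Nat.mul_le_mul_left _ (sum_le_sum_of_subset (subset_univ _))
      _ = _ := by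
          rw [card_eq_sum_card_fiberwise (f := fun n : ℕ => (n : ZMod q)) (t := univ)
            (fun _ _ => by simp)]
          congr 1
          refine sum_congr rfl fun b _ => ?_
          rw [filter_filter, largeSq]
          congr 1
          ext n
          simp only [mem_filter]
          tauto
  have h2 := card_dvd_sq_le (q * E ^ 4) (E ^ 3) (by positivity)
  have h1R : (#(rareClasses q A E) : ℝ) * E ^ 4 ≤
      16 * A * #{n ∈ Icc 1 (q * E ^ 4) | ∃ d, E ^ 3 < d ∧ d ^ 2 ∣ n} := by exact_mod_cast h1
  have hER : (0 : ℝ) < E := by exact_mod_cast hE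
  have h3 : (#(rareClasses q A E) : ℝ) * E ^ 4 ≤ 16 * A * (q * E) := by
    refine h1R.trans (mul_le_mul_of_nonneg_left (h2.trans (le_of_eq ?_)) (by positivity))
    push_cast; field_simp
  have h4 : E * (#(rareClasses q A E) * E ^ 3) ≤ E * (16 * A * q) := by
    have : (E : ℝ) * (#(rareClasses q A E) * E ^ 3) ≤ E * (16 * A * q) := by
      calc (E : ℝ) * (#(rareClasses q A E) * E ^ 3) = (#(rareClasses q A E) : ℝ) * E ^ 4 := by ring
        _ ≤ _ := h3
        _ = _ := by ring
    exact_mod_cast this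
  exact Nat.le_of_mul_le_mul_left h4 hE

/-- Outside the rare classes, every reduced class contains a squarefree integer up to `q * E ^ 4`
prime to a prescribed `W`. -/
lemma exists_squarefree {q A E W : ℕ} [NeZero q] (h : ArithBound q A) (hE : 16 * A ^ 2 ≤ E)
    {b : ZMod q} (hb : IsUnit b) (hrare : b ∉ rareClasses q A E) (hW : 0 < W) (hWq : W ≤ q ^ 5)
    (hWc : W.Coprime q) :
    ∃ n, 0 < n ∧ n ≤ q * E ^ 4 ∧ Squarefree n ∧ (n : ZMod q) = b ∧ n.Coprime W := by
  have hA := h.hundred_le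
  have hq : 0 < q := NeZero.pos q
  have hqR : (0 : ℝ) < q := by exact_mod_cast hq
  have hE0 : 0 < E := by nlinarith
  by_contra! hcon
  set S := W.primeFactors with hS
  set N := q * E ^ 4 with hN
  set V : ℝ := ∏ p ∈ S, (1 - 1 / (p : ℝ)) with hV
  have hSp : ∀ p ∈ S, p.Prime := fun p hp => (Nat.mem_primeFactors.mp hp).1
  have hSq : ∀ p ∈ S, p.Coprime q := fun p hp =>
    Nat.Coprime.coprime_dvd_left (Nat.mem_primeFactors.mp hp).2.1 hWc
  have h2A : (2 : ℝ) ^ #S ≤ A := by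
    have := (two_pow_card_primeFactors_le hW.ne').trans (h.divisors W hW hWq)
    exact_mod_cast this
  have hV2 : 1 / 2 ^ #S ≤ V := by
    rw [hV, ← one_div_pow, ← prod_const]
    refine prod_le_prod (fun _ _ => by norm_num) fun p hp => ?_
    have : (2 : ℝ) ≤ p := by exact_mod_cast (hSp p hp).two_le
    have : 1 / (p : ℝ) ≤ 1 / 2 := one_div_le_one_div_of_le (by norm_num) this
    linarith
  have hA0 : (0 : ℝ) < A := by
    have : (100 : ℝ) ≤ A := by exact_mod_cast hA
    linarith
  have hVA : 1 / A ≤ V := (one_div_le_one_div_of_le (by positivity) h2A).trans hV2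
  have hV0 : 0 ≤ V := (by positivity : (0 : ℝ) ≤ 1 / A).trans hVA
  set G := ({p ∈ Icc 2 (E ^ 3) | p.Prime ∧ p.Coprime q ∧ p ∉ S} : Finset ℕ) with hG
  set C : ℕ → Finset ℕ := fun m =>
    {n ∈ Icc 1 N | ((n : ℕ) : ZMod q) = b ∧ m ∣ n ∧ ∀ p ∈ S, ¬ p ∣ n} with hC
  -- the sifted integers of the class `b` all have a square factor, small or large
  have hcover : C 1 ⊆ (G.biUnion fun p => C (p ^ 2)) ∪ largeSq q N (E ^ 3) b := by
    intro n hn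
    obtain ⟨hnI, hnb, -, hnS⟩ := mem_filter.mp hn
    have hnI' := mem_Icc.mp hnI
    have hnW : n.Coprime W := by
      by_contra hnW
      obtain ⟨p, hp, hpn, hpW⟩ := Nat.Prime.not_coprime_iff_dvd.mp hnW
      exact hnS p (Nat.mem_primeFactors.mpr ⟨hp, hpW, hW.ne'⟩) hpn
    have hnq : n.Coprime q := by rw [← ZMod.isUnit_iff_coprime, hnb]; exact hb
    have hsq : ¬ Squarefree n := fun hsq => hcon n hnI'.1 hnI'.2 hsq hnb hnW
    rw [Nat.squarefree_iff_prime_squarefree] at hsq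
    push Not at hsq
    obtain ⟨p, hp, hpn⟩ := hsq
    rw [← pow_two] at hpn
    have hpn' : p ∣ n := (dvd_pow_self p (by norm_num)).trans hpn
    rcases Nat.lt_or_ge (E ^ 3) p with hl | hl
    · exact mem_union_right _ (mem_filter.mpr ⟨hnI, hnb, p, hl, hpn⟩)
    · refine mem_union_left _ (mem_biUnion.mpr ⟨p, mem_filter.mpr ⟨mem_Icc.mpr ⟨hp.two_le, hl⟩, hp,
        Nat.Coprime.coprime_dvd_left hpn' hnq, fun hpS => hnS p hpS hpn'⟩,
        mem_filter.mpr ⟨hnI, hnb, hpn, hnS⟩⟩)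
  have hCm : ∀ m, 0 < m → m.Coprime q → (∀ p ∈ S, p.Coprime m) →
      |(#(C m) : ℝ) - E ^ 4 / m * V| ≤ A := by
    intro m hm hmq hSm
    have := (card_sifted q N hq b S hSp hSq m hm hmq hSm).trans h2A
    have e : (N : ℝ) / (q * m) = E ^ 4 / m := by
      rw [hN]; push_cast
      rw [mul_div_mul_left _ _ hqR.ne']
    rwa [e] at this
  have hC1 := hCm 1 one_pos (Nat.coprime_one_left q) (fun p _ => Nat.coprime_one_right p)
  rw [Nat.cast_one, div_one] at hC1
  have hCp : ∀ p ∈ G, (#(C (p ^ 2)) : ℝ) ≤ E ^ 4 * V * ((p : ℝ) ^ 2)⁻¹ + A := by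
    intro p hp
    obtain ⟨hpI, hpp, hpq, hpS⟩ := mem_filter.mp hp
    have := (abs_le.mp (hCm (p ^ 2) (pow_pos hpp.pos 2) (Nat.Coprime.pow_left 2 hpq)
      (fun r hr => Nat.Coprime.pow_right 2 ((Nat.coprime_primes (hSp r hr) hpp).mpr
        (by rintro rfl; exact hpS hr))))).2
    push_cast at this
    have e : (E : ℝ) ^ 4 / p ^ 2 * V = E ^ 4 * V * ((p : ℝ) ^ 2)⁻¹ := by
      rw [div_eq_mul_inv]; ring
    linarith
  have hsum34 : ∑ p ∈ G, ((p : ℝ) ^ 2)⁻¹ ≤ 3 / 4 := by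
    have hE3 : 2 ≤ E ^ 3 := by
      calc 2 ≤ E := by nlinarith
        _ ≤ E ^ 3 := Nat.le_self_pow (by norm_num) E
    calc ∑ p ∈ G, ((p : ℝ) ^ 2)⁻¹ ≤ ∑ p ∈ Icc 2 (E ^ 3), ((p : ℝ) ^ 2)⁻¹ :=
          sum_le_sum_of_subset_of_nonneg (filter_subset _ _) fun _ _ _ => by positivity
      _ = 1 / 4 + ∑ p ∈ Ioc 2 (E ^ 3), ((p : ℝ) ^ 2)⁻¹ := by
          rw [← add_sum_Ioc_eq_sum_Icc hE3]; norm_num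
      _ ≤ 1 / 4 + (((2 : ℕ) : ℝ)⁻¹ - ((E ^ 3 : ℕ) : ℝ)⁻¹) := by
          gcongr
          exact sum_Ioc_inv_sq_le_sub (by norm_num) hE3
      _ ≤ 3 / 4 := by
          have : (0 : ℝ) ≤ ((E ^ 3 : ℕ) : ℝ)⁻¹ := by positivity
          push_cast at this ⊢
          linarith
  have hGc : (#G : ℝ) ≤ E ^ 3 := by
    have : #G ≤ E ^ 3 := by
      refine (card_le_card (filter_subset _ _)).trans ?_
      rw [Nat.card_Icc]; omega
    exact_mod_cast this
  have hL : 16 * A * (#(largeSq q N (E ^ 3) b) : ℝ) < E ^ 4 := by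
    have : ¬ E ^ 4 ≤ 16 * A * #(largeSq q N (E ^ 3) b) := fun hh =>
      hrare (mem_filter.mpr ⟨mem_univ _, hh⟩)
    push Not at this
    exact_mod_cast this
  have hcard : (#(C 1) : ℝ) ≤ ∑ p ∈ G, (#(C (p ^ 2)) : ℝ) + #(largeSq q N (E ^ 3) b) := by
    have := (card_le_card hcover).trans ((card_union_le _ _).trans
      (Nat.add_le_add_right card_biUnion_le _))
    exact_mod_cast this
  -- at most three quarters of them have a square factor `p ^ 2` with `p ≤ E ^ 3`, up to the error
  -- terms, and not being rare bounds those with a larger one: this contradicts `hC1`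
  have hGsum : ∑ p ∈ G, (#(C (p ^ 2)) : ℝ) ≤ E ^ 4 * V * (3 / 4) + E ^ 3 * A := by
    calc ∑ p ∈ G, (#(C (p ^ 2)) : ℝ) ≤ ∑ p ∈ G, (E ^ 4 * V * ((p : ℝ) ^ 2)⁻¹ + A) := sum_le_sum hCp
      _ = E ^ 4 * V * ∑ p ∈ G, ((p : ℝ) ^ 2)⁻¹ + #G * A := by
          rw [sum_add_distrib, mul_sum, sum_const, nsmul_eq_mul]
      _ ≤ _ := by gcongr
  have hC1' := (abs_le.mp hC1).1
  have hER : (16 * A ^ 2 : ℝ) ≤ E := by exact_mod_cast hE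
  have hA100 : (100 : ℝ) ≤ A := by exact_mod_cast hA
  have hE1 : (1 : ℝ) ≤ E := by nlinarith
  have hE31 : (1 : ℝ) ≤ (E : ℝ) ^ 3 := one_le_pow₀ hE1
  have hmain : (E : ℝ) ^ 4 / A ≤ E ^ 4 * V := by
    rw [div_eq_mul_one_div]; gcongr
  have hL' : (#(largeSq q N (E ^ 3) b) : ℝ) < E ^ 4 / A / 16 := by
    rw [lt_div_iff₀ (by norm_num), lt_div_iff₀ hA0]; linarith
  have h16 : 16 * A * (E : ℝ) ^ 3 ≤ E ^ 4 / A := by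
    rw [le_div_iff₀ hA0]
    calc 16 * A * (E : ℝ) ^ 3 * (A : ℝ) = (16 * (A : ℝ) ^ 2) * (E : ℝ) ^ 3 := by ring
      _ ≤ (E : ℝ) * (E : ℝ) ^ 3 := by gcongr
      _ = (E : ℝ) ^ 4 := by ring
  have hAE : (A : ℝ) ≤ A * E ^ 3 := le_mul_of_one_le_right hA0.le hE31
  have hpos : 0 < (E : ℝ) ^ 4 / A := by positivity
  linarith

/-! ### From a constant sign in one class to a class function -/

/-- If `f` is constant on the squarefree integers of one reduced class, then the signs of the
squarefree integers define a function `F` on the reduced classes, and `f y = F y` for most `y`. -/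
lemma exists_class_function {q A E : ℕ} [NeZero q] (h : ArithBound q A) (hE : 16 * A ^ 2 ≤ E)
    (hN : (q * E ^ 8) ^ 2 ≤ q ^ 5) {f : ℕ → ℤˣ} (hf : ∀ m n, m ≠ 0 → n ≠ 0 → f (m * n) = f m * f n)
    {a : ZMod q} (ha : IsUnit a) {δ : ℤˣ}
    (hδ : ∀ n, Squarefree n → n ≤ q * E ^ 8 * (q * E ^ 4) → (n : ZMod q) = a → f n = δ) :
    ∃ F : ZMod q → ℤˣ, #(excSet q f F (q * E ^ 8)) * E ≤ 65 * A * (q * E ^ 8) := by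
  have hA := h.hundred_le
  have hq : 0 < q := NeZero.pos q
  have hE0 : 0 < E := by nlinarith
  set N := q * E ^ 8 with hNdef
  have hN0 : 0 < N := by positivity
  have hqN : q ≤ N := Nat.le_mul_of_pos_right _ (by positivity)
  have hN5 : N ≤ q ^ 5 := (Nat.le_self_pow (by norm_num) N).trans hN
  set R := rareClasses q A E with hR
  -- Two squarefree integers of one class are compared through a common cofactor landing in `a`.
  have hconst : ∀ x : ZMod q, IsUnit x → a * x⁻¹ ∉ R → ∀ n n' : ℕ, 0 < n → n ≤ N → Squarefree n →
      (n : ZMod q) = x → 0 < n' → n' ≤ N → Squarefree n' → (n' : ZMod q) = x → f n = f n' := by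
    intro x hx hxR n n' hn hnN hns hnx hn' hnN' hns' hnx'
    have hxx : x * x⁻¹ = 1 := ZMod.mul_inv_of_unit x hx
    have hxu : IsUnit (a * x⁻¹) := ha.mul (IsUnit.of_mul_eq_one x (by rw [mul_comm, hxx]))
    have hnq : n.Coprime q := by rw [← ZMod.isUnit_iff_coprime, hnx]; exact hx
    have hnq' : n'.Coprime q := by rw [← ZMod.isUnit_iff_coprime, hnx']; exact hx
    obtain ⟨k, hk0, hkN, hks, hkx, hkW⟩ := exists_squarefree h hE hxu hxR (W := n * n')
      (Nat.mul_pos hn hn') (by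
        calc n * n' ≤ N * N := Nat.mul_le_mul hnN hnN'
          _ = N ^ 2 := (pow_two N).symm
          _ ≤ q ^ 5 := hN) (Nat.Coprime.mul_left hnq hnq')
    have prodδ : ∀ m : ℕ, 0 < m → m ≤ N → Squarefree m → (m : ZMod q) = x → m.Coprime k →
        f m * f k = δ := by
      intro m hm hmN hms hmx hmk
      rw [← hf m k hm.ne' hk0.ne']
      refine hδ (m * k) ((Nat.squarefree_mul hmk).mpr ⟨hms, hks⟩) (Nat.mul_le_mul hmN hkN) ?_
      rw [Nat.cast_mul, hmx, hkx, mul_left_comm, hxx, mul_one]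
    have e1 := prodδ n hn hnN hns hnx (Nat.Coprime.coprime_mul_right_right hkW).symm
    have e2 := prodδ n' hn' hnN' hns' hnx' (Nat.Coprime.coprime_mul_left_right hkW).symm
    exact mul_right_cancel (e1.trans e2.symm)
  set F : ZMod q → ℤˣ := fun x =>
    if hx : ∃ n, 0 < n ∧ n ≤ N ∧ Squarefree n ∧ (n : ZMod q) = x then f hx.choose else 1 with hF
  have hFn : ∀ n : ℕ, n.Coprime q → a * (n : ZMod q)⁻¹ ∉ R → 0 < n → n ≤ N → Squarefree n →
      F n = f n := by
    intro n hnq hnR hn hnN hns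
    have hex : ∃ m, 0 < m ∧ m ≤ N ∧ Squarefree m ∧ (m : ZMod q) = n := ⟨n, hn, hnN, hns, rfl⟩
    simp only [hF, dif_pos hex]
    obtain ⟨h1, h2, h3, h4⟩ := hex.choose_spec
    exact hconst n ((ZMod.isUnit_iff_coprime n q).mpr hnq) hnR _ _ h1 h2 h3 h4 hn hnN hns rfl
  have hstep : ∀ (l : ℕ) (x : ZMod q), l.Prime → l.Coprime q → l ≤ E → IsUnit x → x ∉ R →
      a * x⁻¹ ∉ R → a * (l * x)⁻¹ ∉ R → F (l * x) = f l * F x := by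
    intro l x hl hlq hlE hx hxR haxR halxR
    obtain ⟨n, hn0, hnN, hns, hnx, hnl⟩ := exists_squarefree h hE hx hxR hl.pos
      (hlE.trans ((Nat.le_self_pow (by norm_num) E).trans
        ((Nat.le_mul_of_pos_left _ hq).trans hN5))) hlq
    have hnq : n.Coprime q := by rw [← ZMod.isUnit_iff_coprime, hnx]; exact hx
    have hlnN : l * n ≤ N := by
      calc l * n ≤ E * (q * E ^ 4) := Nat.mul_le_mul hlE hnN
        _ = q * E ^ 5 := by ring
        _ ≤ q * E ^ 8 := Nat.mul_le_mul_left _ (Nat.pow_le_pow_right hE0 (by norm_num))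
    have hnN' : n ≤ N := (Nat.le_mul_of_pos_left n hl.pos).trans hlnN
    subst hnx
    rw [hFn n hnq haxR hn0 hnN' hns, ← hf l n hl.ne_zero hn0.ne', ← Nat.cast_mul]
    exact hFn (l * n) (Nat.Coprime.mul_left hlq hnq) (by rwa [Nat.cast_mul])
      (Nat.mul_pos hl.pos hn0) hlnN ((Nat.squarefree_mul hnl.symm).mpr ⟨hl.prime.squarefree, hns⟩)
  set R' := ({x : ZMod q | IsUnit x ∧ (x ∈ R ∨ a * x⁻¹ ∈ R)} : Finset (ZMod q)) with hR'
  have hR'c : #R' ≤ 2 * #R := by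
    have : R' ⊆ R ∪ ({x : ZMod q | IsUnit x ∧ a * x⁻¹ ∈ R} : Finset (ZMod q)) := by
      intro x hx
      obtain ⟨hxu, hx | hx⟩ := (mem_filter.mp hx).2
      · exact mem_union_left _ hx
      · exact mem_union_right _ (mem_filter.mpr ⟨mem_univ _, hxu, hx⟩)
    have h2 : #{x : ZMod q | IsUnit x ∧ a * x⁻¹ ∈ R} ≤ #R := by
      refine card_le_card_of_injOn (fun x => a * x⁻¹) (fun x hx => ?_) ?_
      · simp only [coe_filter, mem_univ, true_and, Set.mem_ofPred_eq] at hx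
        exact hx.2
      · intro x hx y hy e
        simp only [coe_filter, mem_univ, true_and, Set.mem_ofPred_eq] at hx hy
        have e' := ha.mul_right_inj.mp e
        have hxx := ZMod.mul_inv_of_unit x hx.1
        have hyy := ZMod.mul_inv_of_unit y hy.1
        calc x = x * (y * y⁻¹) := by rw [hyy, mul_one]
          _ = y * (x * x⁻¹) := by rw [e']; ring
          _ = y := by rw [hxx, mul_one]
    have := (card_le_card this).trans (card_union_le _ _)
    omega
  refine ⟨F, ?_⟩
  -- A failure at `y = d ^ 2 * s` forces `d > E` or a rare class among the `s * e` with `e ∣ d ^ 2`.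
  have hcover : excSet q f F N ⊆ ({n ∈ Icc 1 N | ∃ d, E < d ∧ d ^ 2 ∣ n} : Finset ℕ) ∪
      (Icc 1 (E ^ 2) ×ˢ ({w ∈ Icc 1 N | (w : ZMod q) ∈ R'} : Finset ℕ)).image
        (fun p => p.1 * p.2) := by
    intro y hy
    obtain ⟨hyI, hyq, hne⟩ := mem_filter.mp hy
    have hyI' := mem_Icc.mp hyI
    obtain ⟨s, d, hsd, hs⟩ := Nat.sq_mul_squarefree y
    rcases Nat.lt_or_ge E d with hd | hd
    · exact mem_union_left _ (mem_filter.mpr ⟨hyI, d, hd, ⟨s, hsd.symm⟩⟩)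
    refine mem_union_right _ ?_
    have hd0 : 0 < d := by
      rcases Nat.eq_zero_or_pos d with rfl | hd0
      · simp at hsd; omega
      · exact hd0
    have hs0 : 0 < s := Nat.pos_of_ne_zero hs.ne_zero
    by_contra hcon
    have hgood : ∀ e, e ∣ d ^ 2 → (s * e).Coprime q ∧ s * e ≤ N ∧ ((s * e : ℕ) : ZMod q) ∉ R ∧
        a * ((s * e : ℕ) : ZMod q)⁻¹ ∉ R := by
      rintro e ⟨e', he⟩
      have hy' : e' * (s * e) = y := by rw [← hsd, he]; ring
      have hse : s * e ∣ y := ⟨e', by rw [← hy']; ring⟩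
      have hse0 : 0 < s * e := Nat.pos_of_dvd_of_pos hse hyI'.1
      have hseN : s * e ≤ N := (Nat.le_of_dvd hyI'.1 hse).trans hyI'.2
      have hseq : (s * e).Coprime q := Nat.Coprime.coprime_dvd_left hse hyq
      have he'0 : 0 < e' := Nat.pos_of_dvd_of_pos ⟨s * e, hy'.symm⟩ hyI'.1
      have hnot : ((s * e : ℕ) : ZMod q) ∉ R' := by
        intro hmem
        refine hcon (mem_image.mpr ⟨(e', s * e), mem_product.mpr ⟨mem_Icc.mpr ⟨he'0, ?_⟩,
          mem_filter.mpr ⟨mem_Icc.mpr ⟨hse0, hseN⟩, hmem⟩⟩, hy'⟩)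
        calc e' ≤ d ^ 2 := Nat.le_of_dvd (by positivity) ⟨e, by rw [he]; ring⟩
          _ ≤ E ^ 2 := Nat.pow_le_pow_left hd 2
      rw [hR', mem_filter, not_and, not_and, not_or] at hnot
      exact ⟨hseq, hseN, hnot (mem_univ _) ((ZMod.isUnit_iff_coprime _ q).mpr hseq)⟩
    have hind : ∀ e, e ∣ d ^ 2 → F ((s * e : ℕ) : ZMod q) = f (s * e) := by
      intro e
      induction e using induction_on_primes with
      | zero => intro h0; rw [zero_dvd_iff] at h0; exact absurd h0 (by positivity)
      | one =>
        intro h1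
        obtain ⟨g1, g2, -, g4⟩ := hgood 1 h1
        rw [mul_one] at g1 g2 g4 ⊢
        exact hFn s g1 g4 hs0 g2 hs
      | prime_mul p e hp ih =>
        intro hpe
        have he : e ∣ d ^ 2 := (dvd_mul_left e p).trans hpe
        have hp' : p.Prime := hp
        have hpd : p ∣ d := hp'.dvd_of_dvd_pow ((dvd_mul_right p e).trans hpe)
        obtain ⟨g1, -, g3, g4⟩ := hgood e he
        obtain ⟨k1, -, -, k4⟩ := hgood (p * e) hpe
        have e1 : s * (p * e) = p * (s * e) := by ring
        have he0 : s * e ≠ 0 := by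
          intro h0
          rcases Nat.mul_eq_zero.mp h0 with h0 | h0
          · omega
          · subst h0
            rw [zero_dvd_iff] at he
            exact absurd he (by positivity)
        rw [e1] at k1 k4 ⊢
        rw [Nat.cast_mul] at k4 ⊢
        rw [hf p _ hp'.ne_zero he0, ← ih he]
        exact hstep p _ hp' (Nat.Coprime.coprime_mul_right k1) ((Nat.le_of_dvd hd0 hpd).trans hd)
          ((ZMod.isUnit_iff_coprime _ q).mpr g1) g3 g4 k4
    apply hne
    have := hind (d ^ 2) dvd_rfl
    rwa [mul_comm, hsd] at this
  have hw : #{w ∈ Icc 1 N | ((w : ℕ) : ZMod q) ∈ R'} ≤ #R' * (E ^ 8 + 1) := by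
    rw [card_eq_sum_card_fiberwise (f := fun w : ℕ => (w : ZMod q)) (t := R')
      (fun w hw => by
        simp only [coe_filter, Set.mem_ofPred_eq] at hw
        exact hw.2), ← smul_eq_mul]
    refine sum_le_card_nsmul _ _ _ fun x _ => ?_
    have h1 := card_modEq_Icc_le q N hq x
    have h2 : (N : ℝ) / q = E ^ 8 := by
      rw [hNdef]; push_cast
      have : (q : ℝ) ≠ 0 := by exact_mod_cast hq.ne'
      field_simp
    rw [h2] at h1
    refine (card_le_card fun w hw => ?_).trans
      (show #{n ∈ Icc 1 N | ((n : ℕ) : ZMod q) = x} ≤ E ^ 8 + 1 by exact_mod_cast h1)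
    simp only [mem_filter] at hw ⊢
    exact ⟨hw.1.1, hw.2⟩
  have hsq : #{n ∈ Icc 1 N | ∃ d, E < d ∧ d ^ 2 ∣ n} * E ≤ N := by
    have := card_dvd_sq_le N E hE0
    rw [le_div_iff₀ (by exact_mod_cast hE0)] at this
    exact_mod_cast this
  have hcard := (card_le_card hcover).trans ((card_union_le _ _).trans
    (Nat.add_le_add_left card_image_le _))
  rw [card_product, Nat.card_Icc, Nat.add_sub_cancel] at hcard
  calc #(excSet q f F N) * E
      ≤ (#{n ∈ Icc 1 N | ∃ d, E < d ∧ d ^ 2 ∣ n} + E ^ 2 * (2 * #R * (E ^ 8 + 1))) * E :=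
        Nat.mul_le_mul_right _ (hcard.trans (Nat.add_le_add_left (Nat.mul_le_mul_left _
          (hw.trans (Nat.mul_le_mul_right _ hR'c))) _))
    _ = #{n ∈ Icc 1 N | ∃ d, E < d ∧ d ^ 2 ∣ n} * E + 2 * (#R * E ^ 3) * (E ^ 8 + 1) := by ring
    _ ≤ N + 2 * (16 * A * q) * (E ^ 8 + 1) :=
        Nat.add_le_add hsq (Nat.mul_le_mul_right _ (Nat.mul_le_mul_left _
          (card_rareClasses_le q A E hE0)))
    _ = N + 32 * A * N + 32 * A * q := by rw [hNdef]; ring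
    _ ≤ A * N + 32 * A * N + 32 * A * N :=
        Nat.add_le_add (Nat.add_le_add_right (Nat.le_mul_of_pos_left _ (by omega)) _)
          (Nat.mul_le_mul_left _ hqN)
    _ = 65 * A * N := by ring

/-! ### Parameters, signs and the conclusion -/

/-- The choice of parameters: `E` is about `q ^ (ε / 16)`, and `A` is a power of `q` with an exponent
so small that every power of `A` which occurs is negligible against `E`. -/
lemma exists_params {ε c : ℝ} (hε : 0 < ε) (hc : 0 < c) :
    ∃ q₀ : ℕ, ∀ q : ℕ, q₀ ≤ q → 0 < q ∧ ∃ A E J B : ℕ, ArithBound q A ∧ (E : ℝ) ^ 16 ≤ (q : ℝ) ^ ε ∧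
      2 ≤ E ∧ E ^ (2 * J) ≤ q ∧ q ≤ E ^ (2 * J + 2) ∧ B = A ^ (5 * J + 5) * (65 * A + 1) ∧
      A ^ 6 * B ≤ E ∧ 16 * A ^ 2 ≤ E ∧
      (20 * A ^ 2 * B / E : ℝ) ≤ c / (q : ℝ) ^ (ε / 100) := by
  set K := ⌈16 / ε⌉₊ with hK
  set k := 5 * K + 20 with hk
  have hk0 : (0 : ℝ) < k := by positivity
  set τ := ε / (128 * k) with hτdef
  have hτ : 0 < τ := by positivity
  obtain ⟨q₁, hq₁⟩ := exists_arithBound τ hτ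
  have big : ∀ s : ℝ, 0 < s → ∀ M : ℝ, ∀ᶠ q : ℕ in Filter.atTop, M ≤ (q : ℝ) ^ s := fun s hs M =>
    ((tendsto_rpow_atTop hs).comp tendsto_natCast_atTop_atTop).eventually_ge_atTop M
  obtain ⟨q₀, hq₀⟩ := Filter.eventually_atTop.mp ((Filter.eventually_ge_atTop q₁).and
    ((Filter.eventually_ge_atTop 2).and ((big τ hτ 2).and ((big (ε / 32) (by positivity) 2).and
      (big (ε / 64 - ε / 100) (by linarith) (1 / c))))))
  refine ⟨q₀, fun q hq => ?_⟩
  obtain ⟨h1, h2, h3, h4, h5⟩ := hq₀ q hq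
  have hqR : (1 : ℝ) < q := by exact_mod_cast h2
  have hq0 : (0 : ℝ) < q := by linarith
  have hAB := hq₁ q h1
  set A := ⌈(q : ℝ) ^ τ⌉₊ with hAdef
  have hA := hAB.hundred_le
  set E := ⌊(q : ℝ) ^ (ε / 16)⌋₊ with hEdef
  have hAle : (A : ℝ) ≤ (q : ℝ) ^ (2 * τ) := by
    have := Nat.ceil_lt_add_one (Real.rpow_nonneg hq0.le τ)
    have e : (q : ℝ) ^ (2 * τ) = (q : ℝ) ^ τ * (q : ℝ) ^ τ := by
      rw [two_mul, Real.rpow_add hq0]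
    rw [e]
    nlinarith
  -- `k` bounds every exponent of `A` in what follows, and `τ` makes `A ^ k` a smaller power of `q`
  -- than `E`
  have hAk : (A : ℝ) ^ k ≤ (q : ℝ) ^ (ε / 64) := by
    calc (A : ℝ) ^ k ≤ ((q : ℝ) ^ (2 * τ)) ^ k := pow_le_pow_left₀ (by positivity) hAle k
      _ = (q : ℝ) ^ (ε / 64) := by
        rw [← Real.rpow_natCast, ← Real.rpow_mul hq0.le]
        congr 1
        rw [hτdef]; field_simp; norm_num
  have hEge : (q : ℝ) ^ (ε / 32) ≤ E := by
    have := Nat.lt_floor_add_one ((q : ℝ) ^ (ε / 16))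
    have e : (q : ℝ) ^ (ε / 16) = (q : ℝ) ^ (ε / 32) * (q : ℝ) ^ (ε / 32) := by
      rw [← Real.rpow_add hq0]; congr 1; ring
    rw [← hEdef, e] at this
    nlinarith
  have hEle : (E : ℝ) ≤ (q : ℝ) ^ (ε / 16) := Nat.floor_le (Real.rpow_nonneg hq0.le _)
  have hE2 : 2 ≤ E := by exact_mod_cast h4.trans hEge
  have hE0 : (0 : ℝ) < E := by exact_mod_cast (by omega : 0 < E)
  have hAkE : A ^ k ≤ E := by
    have : (A : ℝ) ^ k ≤ E := hAk.trans
      ((Real.rpow_le_rpow_of_exponent_le hqR.le (by linarith)).trans hEge)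
    exact_mod_cast this
  set J := Nat.log E q / 2 with hJ
  have hJq : E ^ (2 * J) ≤ q :=
    (Nat.pow_le_pow_right (by omega) (Nat.mul_div_le _ 2)).trans
      (Nat.pow_log_le_self E (by omega))
  have hJq' : q ≤ E ^ (2 * J + 2) :=
    (Nat.lt_pow_succ_log_self (by omega) q).le.trans
      (Nat.pow_le_pow_right (by omega) (by omega))
  have hJK : J ≤ K := by
    have e1 : (q : ℝ) ^ (ε / 32 * (2 * J : ℕ)) ≤ (q : ℝ) ^ (1 : ℝ) := by
      rw [Real.rpow_mul hq0.le, Real.rpow_natCast, Real.rpow_one]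
      calc ((q : ℝ) ^ (ε / 32)) ^ (2 * J) ≤ (E : ℝ) ^ (2 * J) :=
            pow_le_pow_left₀ (Real.rpow_nonneg hq0.le _) hEge _
        _ ≤ q := by exact_mod_cast hJq
    have e2 := (Real.rpow_le_rpow_left_iff hqR).mp e1
    push_cast at e2
    have e3 : (J : ℝ) ≤ 16 / ε := by
      rw [le_div_iff₀ hε]; linarith
    exact_mod_cast e3.trans (Nat.le_ceil _)
  set B := A ^ (5 * J + 5) * (65 * A + 1) with hB
  have hBA : B ≤ A ^ (5 * J + 7) := by
    calc B ≤ A ^ (5 * J + 5) * A ^ 2 := Nat.mul_le_mul_left _ (by nlinarith)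
      _ = A ^ (5 * J + 7) := by rw [← pow_add]
  have hpow : ∀ m, m ≤ k → A ^ m ≤ A ^ k := fun m hm => Nat.pow_le_pow_right (by omega) hm
  refine ⟨by omega, A, E, J, B, hAB, ?_, hE2, hJq, hJq', rfl, ?_, ?_, ?_⟩
  · calc (E : ℝ) ^ 16 ≤ ((q : ℝ) ^ (ε / 16)) ^ 16 := pow_le_pow_left₀ hE0.le hEle _
      _ = (q : ℝ) ^ ε := by
        rw [← Real.rpow_natCast, ← Real.rpow_mul hq0.le]
        congr 1; push_cast; ring
  · calc A ^ 6 * B ≤ A ^ 6 * A ^ (5 * J + 7) := Nat.mul_le_mul_left _ hBA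
      _ = A ^ (5 * J + 13) := by rw [← pow_add]; congr 1; ring
      _ ≤ E := (hpow _ (by omega)).trans hAkE
  · calc 16 * A ^ 2 ≤ A * A ^ 2 := Nat.mul_le_mul_right _ (by omega)
      _ = A ^ 3 := by ring
      _ ≤ E := (hpow _ (by omega)).trans hAkE
  · have hnum : 20 * A ^ 2 * B ≤ A ^ k := by
      calc 20 * A ^ 2 * B ≤ A * A ^ 2 * A ^ (5 * J + 7) := by gcongr; omega
        _ = A ^ (5 * J + 10) := by rw [← pow_succ', ← pow_add]; congr 1; ring
        _ ≤ A ^ k := hpow _ (by omega)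
    have hnum' : (20 * A ^ 2 * B : ℝ) ≤ (q : ℝ) ^ (ε / 64) := by
      refine le_trans ?_ hAk
      exact_mod_cast hnum
    rw [div_le_div_iff₀ hE0 (Real.rpow_pos_of_pos hq0 _)]
    have e1 : (q : ℝ) ^ (ε / 64 - ε / 100) * ((q : ℝ) ^ (ε / 64) * (q : ℝ) ^ (ε / 100)) =
        (q : ℝ) ^ (ε / 32) := by
      rw [← Real.rpow_add hq0, ← Real.rpow_add hq0]; congr 1; ring
    set y := (q : ℝ) ^ (ε / 64) * (q : ℝ) ^ (ε / 100) with hy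
    have hy0 : 0 < y := by positivity
    calc (20 * A ^ 2 * B : ℝ) * (q : ℝ) ^ (ε / 100) ≤ y := by
          rw [hy]; gcongr
      _ = c * (1 / c * y) := by field_simp
      _ ≤ c * (q : ℝ) ^ (ε / 32) := by
        rw [← e1]; gcongr
      _ ≤ c * E := by gcongr

/-- The completely multiplicative extension of the signs of `h` at primes. A zero of `h` gets the
sign `+1`. -/
def signFn (h : ℕ → ℝ) (n : ℕ) : ℤˣ :=
  (n.primeFactorsList.map fun p => if h p < 0 then (-1 : ℤˣ) else 1).prod

lemma signFn_mul (h : ℕ → ℝ) (m n : ℕ) (hm : m ≠ 0) (hn : n ≠ 0) :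
    signFn h (m * n) = signFn h m * signFn h n := by
  unfold signFn
  rw [((Nat.perm_primeFactorsList_mul hm hn).map _).prod_eq, List.map_append, List.prod_append]

lemma signFn_prime (h : ℕ → ℝ) {p : ℕ} (hp : p.Prime) :
    signFn h p = if h p < 0 then -1 else 1 := by
  simp [signFn, Nat.primeFactorsList_prime hp]

/-- On squarefree integers coprime to `q`, `signFn h` is the sign of `h`. -/
lemma signFn_mul_pos {h : ℕ → ℝ} (hm : IsMultFn h) {q : ℕ}
    (h0 : ∀ p : ℕ, p.Prime → ¬ p ∣ q → h p ≠ 0) {n : ℕ} (hn : Squarefree n) (hnq : n.Coprime q) :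
    0 < ((signFn h n : ℤ) : ℝ) * h n := by
  induction n using induction_on_primes with
  | zero => exact absurd rfl hn.ne_zero
  | one => simp [signFn, hm.1]
  | prime_mul p e hp ih =>
    have hcop : p.Coprime e := Nat.coprime_of_squarefree_mul hn
    have he := ih hn.of_mul_right (Nat.Coprime.coprime_mul_left hnq)
    have hpq := h0 p hp ((Nat.Prime.coprime_iff_not_dvd hp).mp (Nat.Coprime.coprime_mul_right hnq))
    have hsp : 0 < ((signFn h p : ℤ) : ℝ) * h p := by
      rw [signFn_prime h hp]
      split_ifs with hlt
      · push_cast; linarith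
      · have := lt_of_le_of_ne (not_lt.mp hlt) hpq.symm
        simpa using this
    rw [hm.2 p e hcop, signFn_mul h p e hp.ne_zero hn.of_mul_right.ne_zero]
    push_cast
    have := mul_pos hsp he
    linarith

/-- If some reduced class contains no sign change up to `x`, then the sign function is constant
on its squarefree elements up to `x`. -/
lemma exists_signFn_const {h : ℕ → ℝ} (hm : IsMultFn h) {q : ℕ}
    (h0 : ∀ p : ℕ, p.Prime → ¬ p ∣ q → h p ≠ 0) {x : ℝ} (hx : ¬ signChangesBelow h q x) :
    ∃ (a : (ZMod q)ˣ) (δ : ℤˣ), ∀ n : ℕ, Squarefree n → (n : ℝ) ≤ x → (n : ZMod q) = a →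
      signFn h n = δ := by
  unfold signChangesBelow at hx
  push Not at hx
  obtain ⟨a, ha⟩ := hx
  have hpos : ∀ n : ℕ, Squarefree n → (n : ZMod q) = a → 0 < ((signFn h n : ℤ) : ℝ) * h n :=
    fun n hn hna => signFn_mul_pos hm h0 hn
      ((ZMod.isUnit_iff_coprime n q).mp (hna ▸ a.isUnit))
  by_cases hneg : ∃ n : ℕ, Squarefree n ∧ (n : ℝ) ≤ x ∧ (n : ZMod q) = a ∧ h n < 0
  · refine ⟨a, -1, fun n hn hnx hna => ?_⟩
    have h1 := ha hneg n hn hnx hna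
    have h2 := hpos n hn hna
    rcases Int.units_eq_one_or (signFn h n) with e | e
    · rw [e] at h2; push_cast at h2; linarith
    · exact e
  · refine ⟨a, 1, fun n hn hnx hna => ?_⟩
    have h1 : ¬ h n < 0 := fun hlt => hneg ⟨n, hn, hnx, hna, hlt⟩
    have h2 := hpos n hn hna
    rcases Int.units_eq_one_or (signFn h n) with e | e
    · exact e
    · rw [e] at h2; push_cast at h2; linarith

/-- The real Dirichlet character attached to a `±1`-valued homomorphism on the unit group. -/
def realChar {q : ℕ} (χ : (ZMod q)ˣ →* ℤˣ) : DirichletCharacter ℝ q :=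
  MulChar.ofUnitHom ((Units.map (Int.castRingHom ℝ).toMonoidHom).comp χ)

lemma realChar_unit {q : ℕ} (χ : (ZMod q)ˣ →* ℤˣ) (u : (ZMod q)ˣ) :
    realChar χ (u : ZMod q) = ((χ u : ℤ) : ℝ) := by
  simp [realChar]

lemma realChar_sq {q : ℕ} (χ : (ZMod q)ˣ →* ℤˣ) : realChar χ * realChar χ = 1 := by
  ext u
  rw [MulChar.mul_apply, realChar_unit, MulChar.one_apply_coe]
  rcases Int.units_eq_one_or (χ u) with e | e <;> rw [e] <;> norm_num

end

/-- **Theorem (Linnik's problem for multiplicative functions, easy version).**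
For all sufficiently small `ε > 0` and every `c > 0`, for every sufficiently large `q` and every
multiplicative `h : ℕ → ℝ` with `h p ≠ 0` for all primes `p ∤ q`, either `R(h;q) ≤ q^(2+ε)`, or
there is a real Dirichlet character `χ (mod q)` of order at most two such that
`∑_{p ≤ q^(1/3), h(p)χ(p) < 0} 1/p ≤ c · q^(-ε/100)`. -/
theorem linnik_mult_easy :
    ∃ ε₀ : ℝ, 0 < ε₀ ∧
      ∀ ε : ℝ, 0 < ε → ε < ε₀ →
      ∀ c : ℝ, 0 < c →
      ∃ q₀ : ℕ,
        ∀ q : ℕ, q₀ ≤ q →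
          ∀ h : ℕ → ℝ, IsMultFn h →
            (∀ p : ℕ, p.Prime → ¬ p ∣ q → h p ≠ 0) →
            signChangesBelow h q ((q : ℝ) ^ (2 + ε)) ∨
            ∃ χ : DirichletCharacter ℝ q, χ * χ = 1 ∧
              ∑ p ∈ (Finset.range (q + 1)).filter
                  (fun p : ℕ => p.Prime ∧ (p : ℝ) ≤ (q : ℝ) ^ ((1 : ℝ) / 3) ∧
                    h p * χ (p : ZMod q) < 0),
                (1 : ℝ) / (p : ℝ) ≤ c / (q : ℝ) ^ (ε / 100) := by
  refine ⟨1, one_pos, fun ε hε hε1 c hc => ?_⟩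
  obtain ⟨q₀, hq₀⟩ := exists_params hε hc
  refine ⟨q₀, fun q hq h hm h0 => ?_⟩
  obtain ⟨hqpos, A, E, J, B, hAB, hE16, hE2, hJ, hJ', hB, hBE, hAE, hfin⟩ := hq₀ q hq
  have : NeZero q := ⟨hqpos.ne'⟩
  have hq1 : (1 : ℝ) ≤ q := by exact_mod_cast hqpos
  have hE1 : (1 : ℝ) ≤ E := by exact_mod_cast (by omega : 1 ≤ E)
  have hE16q : E ^ 16 ≤ q := by
    have : (E : ℝ) ^ 16 ≤ q := hE16.trans (by
      simpa using Real.rpow_le_rpow_of_exponent_le hq1 hε1.le)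
    exact_mod_cast this
  refine or_iff_not_imp_left.mpr fun hx => ?_
  obtain ⟨a, δ, hδ⟩ := exists_signFn_const hm h0 hx
  have hN2 : (q * E ^ 8) ^ 2 ≤ q ^ 5 := by
    calc (q * E ^ 8) ^ 2 = q ^ 2 * E ^ 16 := by ring
      _ ≤ q ^ 2 * q := by gcongr
      _ = q ^ 3 := by ring
      _ ≤ q ^ 5 := Nat.pow_le_pow_right hqpos (by norm_num)
  have hN : q * E ^ 8 ≤ q ^ 5 := (Nat.le_self_pow (by norm_num) _).trans hN2
  obtain ⟨F, hF⟩ := exists_class_function hAB hAE hN2 (signFn_mul h) a.isUnit (δ := δ)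
    (fun n hn hle hna => hδ n hn (by
      calc (n : ℝ) ≤ ((q * E ^ 8 * (q * E ^ 4) : ℕ) : ℝ) := by exact_mod_cast hle
        _ = (q : ℝ) ^ 2 * (E : ℝ) ^ 12 := by push_cast; ring
        _ ≤ (q : ℝ) ^ 2 * (E : ℝ) ^ 16 := by gcongr; norm_num
        _ ≤ (q : ℝ) ^ 2 * (q : ℝ) ^ ε := by gcongr
        _ = (q : ℝ) ^ (2 + ε) := by
          rw [Real.rpow_add (by linarith), Real.rpow_two]) hna)
  obtain ⟨χ, hχ⟩ := exists_char_sum_le hAB (signFn_mul h) hN hF hJ hJ' hB hBE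
  refine ⟨realChar χ, realChar_sq χ, (hχ _ fun p hp => ?_).trans hfin⟩
  obtain ⟨hpr, hp, hp3, hneg⟩ := Finset.mem_filter.mp hp
  refine ⟨hp.pos, by simpa [Nat.lt_succ_iff] using hpr, ?_, ?_⟩
  · have hp3' : p ^ 3 ≤ q := by
      have : (p : ℝ) ^ 3 ≤ q := by
        calc (p : ℝ) ^ 3 ≤ ((q : ℝ) ^ ((1 : ℝ) / 3)) ^ 3 := pow_le_pow_left₀ (by positivity) hp3 3
          _ = q := by
            rw [← Real.rpow_natCast, ← Real.rpow_mul (by positivity)]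
            norm_num
      exact_mod_cast this
    have hpE : p ≤ E ^ (J + 1) := by
      refine (Nat.pow_le_pow_iff_left (two_ne_zero)).mp ?_
      calc p ^ 2 ≤ p ^ 3 := Nat.pow_le_pow_right hp.pos (by norm_num)
        _ ≤ E ^ (2 * J + 2) := hp3'.trans hJ'
        _ = (E ^ (J + 1)) ^ 2 := by rw [← pow_mul]; congr 1; ring
    calc 2 * p ≤ E * E ^ (J + 1) := Nat.mul_le_mul hE2 hpE
      _ = E ^ (J + 2) := by ring
      _ ≤ E ^ (J + 4) := Nat.pow_le_pow_right (by omega) (by omega)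
  · have hu : IsUnit (p : ZMod q) := by
      by_contra hu
      rw [MulChar.map_nonunit _ hu, mul_zero] at hneg
      exact lt_irrefl _ hneg
    obtain ⟨u, hu⟩ := hu
    refine ⟨u, hu, fun heq => ?_⟩
    rw [← hu, realChar_unit, ← heq, signFn_prime h hp] at hneg
    split_ifs at hneg with hlt
    · push_cast at hneg; linarith
    · push_cast at hneg; linarith
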